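/- arXiv:1412.1793 — 3 statements merged into one kernel-verified Lean document; each statement's English description precedes it below -/
import Mathlib

section
/- There exists a function f : ℕ × ℕ → ℕ such that for every integer ℓ ≥ 0, every integer d, and every graph G of distance VC-dimension at most d, the B_ℓ-hypergraph of G satisfies τ_ℓ ≤ f(ν_ℓ, d); in other words, G can be covered by f(ν_ℓ, d) balls of radius ℓ. -/
open SimpleGraph

/-- The ball of center `v` and radius `k` in a graph. -/
def gball {V : Type*} (G : SimpleGraph V) (v : V) (k : ℕ) : Set V :=
  {w | G.edist v w ≤ (k : ℕ∞)}

/-- `X` is shattered by the B-hypergraph of `G` (hyperedges: all balls of all radii). -/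
def BShattered {V : Type*} (G : SimpleGraph V) (X : Set V) : Prop :=
  ∀ Y ⊆ X, ∃ (v : V) (k : ℕ), gball G v k ∩ X = Y

/-- The distance VC-dimension of `G` is at most `d`. -/
def distVCdimLE {V : Type*} (G : SimpleGraph V) (d : ℕ) : Prop :=
  ∀ (S : Set V) (X : Set S), BShattered (G.induce S) X → X.ncard ≤ d

/-- Transversality of the `B_ℓ`-hypergraph: minimum size of a set meeting every ball of radius ℓ. -/
noncomputable def transversality {V : Type*} [Fintype V] (G : SimpleGraph V) (ℓ : ℕ) : ℕ :=
  sInf {n | ∃ T : Finset V, T.card = n ∧ ∀ v : V, ∃ t ∈ T, t ∈ gball G v ℓ}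

/-- Packing number of the `B_ℓ`-hypergraph: maximum number of pairwise disjoint balls of radius ℓ. -/
noncomputable def packingNumber {V : Type*} [Fintype V] (G : SimpleGraph V) (ℓ : ℕ) : ℕ :=
  sSup {n | ∃ C : Finset V, C.card = n ∧
    (C : Set V).Pairwise fun u w => Disjoint (gball G u ℓ) (gball G w ℓ)}

/-
Suppose that every probability measure on `V` gives some `ℓ`-ball mass at least `1 / N`, where `N`
depends only on `ν` and `d`. By the minimax theorem one measure gives mass at least `1 / N` to all
`ℓ`-balls at once, and since these have VC-dimension at most `d`, the ε-net theorem provides a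
hitting set of size bounded in terms of `N` and `d`.

For the ε-net theorem, draw `m` blocks of points, so long that each misses a given heavy set with
probability at most `1 / (2 * m)`, and pair every block with a second, ghost block. If no sample
hits every heavy set, then with probability at least `1 / 2` some heavy set misses all sample
blocks and meets all ghost blocks. But for fixed pairs, the swaps of sample and ghost blocks
producing this event are determined by the trace of the heavy set on the points drawn, and by the
Sauer–Shelah lemma there are fewer than `2 ^ m / 2` traces.

To find the heavy ball, assume all `ℓ`-balls are light and sample many points. With positive
probability no sampled point lies within `ℓ` of the middle of a fixed geodesic between two others.
By Ramsey's theorem either `ν + 1` of the points have pairwise disjoint `ℓ`-balls, which is absurd,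
or many of them have pairwise intersecting `ℓ`-balls. In the latter case let `H` be any graph on
these points and keep only the vertices on the geodesics joining `H`-adjacent points. In the induced
subgraph, `H`-adjacent points are at distance at most `2ℓ`, while points at `H`-distance more than
two are at distance more than `2ℓ`: a walk between them has an edge across which the nearest
sampled point changes, and near such an edge every other sampled point is far. With `H` the
membership graph between a `(d + 1)`-set and its subsets, balls of radius `2ℓ` shatter `d + 1`
points.
-/

open MeasureTheory Finset
open scoped ENNReal

section Minimax

open Matrix

theorem exists_stdSimplex_forall_le_vecMul {ι κ : Type*} [Fintype ι] [Fintype κ] [Nonempty ι]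
    [Nonempty κ] (a : Matrix ι κ ℝ) {β : ℝ} (h : ∀ p ∈ stdSimplex ℝ κ, ∃ i, β ≤ (a *ᵥ p) i) :
    ∃ q ∈ stdSimplex ℝ ι, ∀ j, β ≤ (q ᵥ* a) j := by
  classical
  have convex_left (q : ι → ℝ) : ConvexOn ℝ (stdSimplex ℝ κ) fun p => q ⬝ᵥ a *ᵥ p :=
    (dotProductBilin ℝ ℝ q ∘ₗ a.mulVecLin).convexOn (convex_stdSimplex ℝ κ)
  have concave_right (p : κ → ℝ) : ConcaveOn ℝ (stdSimplex ℝ ι) fun q => q ⬝ᵥ a *ᵥ p :=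
    ((dotProductBilin ℝ ℝ).flip (a *ᵥ p)).concaveOn (convex_stdSimplex ℝ ι)
  obtain ⟨p, hp, q, hq, saddle⟩ := Sion.exists_isSaddlePointOn
    (f := fun (p : κ → ℝ) (q : ι → ℝ) => q ⬝ᵥ a *ᵥ p)
    ⟨_, single_mem_stdSimplex ℝ (Classical.arbitrary κ)⟩ (convex_stdSimplex ℝ κ)
    (isCompact_stdSimplex ℝ κ)
    (fun q _ => (by fun_prop : Continuous fun p : κ → ℝ => q ⬝ᵥ a *ᵥ p).lowerSemicontinuous
      |>.lowerSemicontinuousOn _)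
    (fun q _ => (convex_left q).quasiconvexOn) (convex_stdSimplex ℝ ι)
    ⟨_, single_mem_stdSimplex ℝ (Classical.arbitrary ι)⟩ (isCompact_stdSimplex ℝ ι)
    (fun p _ => (by fun_prop : Continuous fun q : ι → ℝ => q ⬝ᵥ a *ᵥ p).upperSemicontinuous
      |>.upperSemicontinuousOn _)
    (fun p _ => (concave_right p).quasiconcaveOn)
  obtain ⟨i, hi⟩ := h p hp
  refine ⟨q, hq, fun j => hi.trans ?_⟩
  change (a *ᵥ p) i ≤ q ⬝ᵥ a.col j
  simpa using saddle _ (single_mem_stdSimplex ℝ j) _ (single_mem_stdSimplex ℝ i)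

theorem exists_isProbabilityMeasure_real_eq {V : Type*} [Fintype V] [MeasurableSpace V]
    [MeasurableSingletonClass V] {p : V → ℝ} (hp : p ∈ stdSimplex ℝ V) :
    ∃ μ : Measure V, IsProbabilityMeasure μ ∧ ∀ s : Set V, μ.real s = ∑ v, s.indicator p v := by
  have sum_eq_one : ∑ v, ENNReal.ofReal (p v) = 1 := by
    rw [← ENNReal.ofReal_sum_of_nonneg fun v _ => hp.1 v, hp.2, ENNReal.ofReal_one]
  refine ⟨(PMF.ofFintype _ sum_eq_one).toMeasure, inferInstance, fun s => ?_⟩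
  rw [measureReal_def, PMF.toMeasure_apply_fintype, ENNReal.toReal_sum fun v _ => ?_]
  · refine Finset.sum_congr rfl fun v _ => ?_
    by_cases hv : v ∈ s <;> simp [hv, hp.1 v]
  · by_cases hv : v ∈ s <;> simp [hv]

theorem exists_measure_forall_le_of_forall_measure {U V : Type*} [Finite U] [Finite V] [Nonempty U]
    [Nonempty V] [MeasurableSpace U] [MeasurableSingletonClass U] [MeasurableSpace V]
    [MeasurableSingletonClass V] {r : U → V → Prop} {β : ℝ≥0∞} (hβ : β ≠ ⊤)
    (h : ∀ μ : Measure V, IsProbabilityMeasure μ → ∃ u, β ≤ μ {v | r u v}) :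
    ∃ μ : Measure U, IsProbabilityMeasure μ ∧ ∀ v, β ≤ μ {u | r u v} := by
  classical
  cases nonempty_fintype U
  cases nonempty_fintype V
  let a : Matrix U V ℝ := of fun u v => if r u v then 1 else 0
  have mulVec_eq (p : V → ℝ) (u : U) : (a *ᵥ p) u = ∑ v, {v | r u v}.indicator p v := by
    simp [a, mulVec, dotProduct, Set.indicator_apply]
  have vecMul_eq (q : U → ℝ) (v : V) : (q ᵥ* a) v = ∑ u, {u | r u v}.indicator q u := by
    simp [a, vecMul, dotProduct, Set.indicator_apply]
  obtain ⟨q, hq, q_le⟩ := exists_stdSimplex_forall_le_vecMul a (β := β.toReal) fun p hp => by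
    obtain ⟨μ, hμ, real_eq⟩ := exists_isProbabilityMeasure_real_eq hp
    obtain ⟨u, hu⟩ := h μ hμ
    refine ⟨u, ?_⟩
    rw [mulVec_eq, ← real_eq]
    exact ENNReal.toReal_mono (measure_ne_top _ _) hu
  obtain ⟨μ, hμ, real_eq⟩ := exists_isProbabilityMeasure_real_eq hq
  refine ⟨μ, hμ, fun v => ?_⟩
  rw [← ENNReal.toReal_le_toReal hβ (measure_ne_top _ _), ← measureReal_def, real_eq, ← vecMul_eq]
  exact q_le v

end Minimax

section DoubleSampling

theorem card_mul_measure_le_of_forall_card_le {Ω ι : Type*} [MeasurableSpace Ω] [Fintype ι]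
    {μ : Measure Ω} {T : ι → Ω → Ω} (hT : ∀ i, MeasurePreserving (T i) μ μ) {E : Set Ω}
    (hE : MeasurableSet E) {B : ℕ} (hB : ∀ ω, {i | T i ω ∈ E}.ncard ≤ B) :
    Fintype.card ι * μ E ≤ B * μ Set.univ :=
  calc Fintype.card ι * μ E = ∑ i, μ (T i ⁻¹' E) := by
        simp [(hT _).measure_preimage hE.nullMeasurableSet]
    _ = ∫⁻ ω, ∑ i, (T i ⁻¹' E).indicator 1 ω ∂μ := by
        rw [lintegral_finsetSum _ fun i _ => measurable_one.indicator ((hT i).measurable hE)]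
        simp only [lintegral_indicator_one ((hT _).measurable hE)]
    _ ≤ ∫⁻ _, B ∂μ := by
        refine lintegral_mono fun ω => ?_
        classical
        have card_le : (Finset.univ.filter (T · ω ∈ E)).card ≤ B := by
          simpa [← Set.ncard_coe_finset] using hB ω
        simpa [Set.indicator_apply] using card_le
    _ = B * μ Set.univ := lintegral_const _

theorem one_half_le_measure_pi_forall_notMem {ι W : Type*} [Fintype ι] [MeasurableSpace W]
    {ν : Measure W} [IsProbabilityMeasure ν] {A : Set W} (hA : MeasurableSet A)
    (small : 2 * Fintype.card ι * ν A ≤ 1) :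
    1 / 2 ≤ Measure.pi (fun _ : ι => ν) {y | ∀ i, y i ∉ A} := by
  have hit_le : Measure.pi (fun _ : ι => ν) (⋃ i, Function.eval i ⁻¹' A) ≤ 1 / 2 :=
    calc _ ≤ ∑ i, Measure.pi (fun _ : ι => ν) (Function.eval i ⁻¹' A) :=
          measure_iUnion_fintype_le _ _
      _ = Fintype.card ι * ν A := by
          simp [(measurePreserving_eval (fun _ : ι => ν) _).measure_preimage
            hA.nullMeasurableSet]
      _ ≤ 1 / 2 := by
          rw [ENNReal.le_div_iff_mul_le (by simp) (by simp), mul_comm, ← mul_assoc]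
          exact small
  calc (1 / 2 : ℝ≥0∞) = 1 - 1 / 2 := by simp
    _ ≤ 1 - Measure.pi (fun _ : ι => ν) (⋃ i, Function.eval i ⁻¹' A) := by gcongr
    _ = Measure.pi (fun _ : ι => ν) (⋃ i, Function.eval i ⁻¹' A)ᶜ :=
        (prob_compl_eq_one_sub (.iUnion fun i => measurable_pi_apply i hA)).symm
    _ = Measure.pi (fun _ : ι => ν) {y | ∀ i, y i ∉ A} := by
        congr 1; ext y; simp

/-- Exchanges the two entries of the pair `z i` for each `i` with `σ i = true`. -/
def swapAt {ι W : Type*} (σ : ι → Bool) (z : ι → W × W) (i : ι) : W × W :=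
  cond (σ i) (z i).swap (z i)

theorem measurePreserving_swapAt {ι W : Type*} [Fintype ι] [MeasurableSpace W]
    (ν : Measure W) [SigmaFinite ν] (σ : ι → Bool) :
    MeasurePreserving (swapAt σ) (.pi fun _ => ν.prod ν) (.pi fun _ : ι => ν.prod ν) := by
  refine measurePreserving_pi _ _ (f := fun i (p : W × W) => cond (σ i) p.swap p) fun i => ?_
  cases σ i
  · exact .id _
  · exact Measure.measurePreserving_swap

variable {ι κ W : Type*} [Fintype ι]

/-- The event of the double sampling argument: for a sequence of pairs, some `M a` contains all
first entries (the sample) and no second entry (the ghost sample). -/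
def ghostEvent (ι : Type*) (M : κ → Set W) : Set (ι → W × W) :=
  {z | ∃ a, ∀ i, (z i).1 ∈ M a ∧ (z i).2 ∉ M a}

variable [MeasurableSpace W] [Countable W] [MeasurableSingletonClass W]

theorem one_half_le_measure_ghostEvent {M : κ → Set W} {ν : Measure W} [IsProbabilityMeasure ν]
    (small : ∀ a, 2 * Fintype.card ι * ν (M a) ≤ 1) (miss : ∀ x : ι → W, ∃ a, ∀ i, x i ∈ M a) :
    1 / 2 ≤ Measure.pi (fun _ : ι => ν.prod ν) (ghostEvent ι M) := by
  have slice_le (x : ι → W) : 1 / 2 ≤ Measure.pi (fun _ : ι => ν)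
      {y : ι → W | ∃ a, ∀ i, x i ∈ M a ∧ y i ∉ M a} := by
    obtain ⟨a, ha⟩ := miss x
    refine (one_half_le_measure_pi_forall_notMem .of_discrete (small a)).trans (measure_mono ?_)
    exact fun y hy => ⟨a, fun i => ⟨ha i, hy i⟩⟩
  let e := MeasurableEquiv.arrowProdEquivProdArrow W W ι
  calc (1 / 2 : ℝ≥0∞) = ∫⁻ _, 1 / 2 ∂Measure.pi (fun _ : ι => ν) := by simp
    _ ≤ ∫⁻ x, Measure.pi (fun _ : ι => ν) (Prod.mk x ⁻¹' (e.symm ⁻¹' ghostEvent ι M))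
          ∂Measure.pi (fun _ : ι => ν) := lintegral_mono slice_le
    _ = (Measure.pi fun _ : ι => ν).prod (.pi fun _ : ι => ν) (e.symm ⁻¹' ghostEvent ι M) :=
        (Measure.prod_apply .of_discrete).symm
    _ = Measure.pi (fun _ : ι => ν.prod ν) (ghostEvent ι M) :=
        (measurePreserving_arrowProdEquivProdArrow W W ι (fun _ => ν) fun _ => ν).symm
          |>.measure_preimage_equiv _

theorem two_pow_card_le_of_forall_card_swapAt_le {M : κ → Set W} {ν : Measure W}
    [IsProbabilityMeasure ν] {B : ℕ}
    (small : ∀ a, 2 * Fintype.card ι * ν (M a) ≤ 1) (miss : ∀ x : ι → W, ∃ a, ∀ i, x i ∈ M a)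
    (hB : ∀ z : ι → W × W, {σ | swapAt σ z ∈ ghostEvent ι M}.ncard ≤ B) :
    2 ^ Fintype.card ι ≤ 2 * B := by
  classical
  have key := card_mul_measure_le_of_forall_card_le (measurePreserving_swapAt ν)
    .of_discrete hB
  rw [measure_univ, mul_one, Fintype.card_fun, Fintype.card_bool] at key
  have : (2 ^ Fintype.card ι : ℝ≥0∞) ≤ 2 * B :=
    calc (2 ^ Fintype.card ι : ℝ≥0∞) = 2 * (2 ^ Fintype.card ι * (1 / 2)) := by
          rw [mul_left_comm, ENNReal.mul_div_cancel (by simp) (by simp), mul_one]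
      _ ≤ 2 * (2 ^ Fintype.card ι * Measure.pi (fun _ : ι => ν.prod ν) (ghostEvent ι M)) := by
          gcongr; exact one_half_le_measure_ghostEvent small miss
      _ ≤ 2 * B := by gcongr; exact_mod_cast key
  exact_mod_cast this

theorem card_image_inter_le {α : Type*} [DecidableEq α] {𝒜 : Finset (Finset α)} {X : Finset α}
    {d n : ℕ} (hd : 𝒜.vcDim ≤ d) (hX : #X ≤ n) (hn : 0 < n) :
    #(𝒜.image (X ∩ ·)) ≤ (d + 1) * n ^ d := by
  have shatterer_subset : (𝒜.image (X ∩ ·)).shatterer ⊆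
      (range (d + 1)).biUnion (powersetCard · X) := by
    intro Y hY
    rw [mem_shatterer] at hY
    obtain ⟨_, ht, hYt⟩ := hY.exists_superset
    obtain ⟨A, -, rfl⟩ := mem_image.1 ht
    have hYX : Y ⊆ X := hYt.trans inter_subset_left
    have shatters : 𝒜.Shatters Y := by
      intro Z hZ
      obtain ⟨_, hu, rfl⟩ := hY hZ
      obtain ⟨B, hB, rfl⟩ := mem_image.1 hu
      exact ⟨B, hB, by rw [← inter_assoc, inter_eq_left.2 hYX]⟩
    exact mem_biUnion.2 ⟨#Y, mem_range.2 (Nat.lt_succ_of_le (shatters.card_le_vcDim.trans hd)),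
      mem_powersetCard.2 ⟨hYX, rfl⟩⟩
  calc #(𝒜.image (X ∩ ·)) ≤ #(𝒜.image (X ∩ ·)).shatterer := card_le_card_shatterer _
    _ ≤ #((range (d + 1)).biUnion (powersetCard · X)) := card_le_card shatterer_subset
    _ ≤ #(range (d + 1)) * n ^ d := card_biUnion_le_card_mul _ _ _ fun i hi => ?_
    _ = (d + 1) * n ^ d := by rw [card_range]
  rw [card_powersetCard]
  calc (#X).choose i ≤ #X ^ i := Nat.choose_le_pow _ _
    _ ≤ n ^ i := by gcongr
    _ ≤ n ^ d := Nat.pow_le_pow_right hn (Nat.lt_succ_iff.1 (mem_range.1 hi))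

theorem ncard_swapAt_mem_ghostEvent_le {V : Type*} [DecidableEq V] {𝒜 : Finset (Finset V)}
    {d m s : ℕ} (hd : 𝒜.vcDim ≤ d) (hms : 0 < m * s) (z : Fin m → (Fin s → V) × (Fin s → V)) :
    {σ | swapAt σ z ∈ ghostEvent (Fin m) fun (A : 𝒜) => {b | ∀ t, b t ∉ A.1}}.ncard ≤
      (d + 1) * (m * s) ^ d := by
  let X : Finset V := univ.image fun p : Fin m × Fin s => (z p.1).1 p.2
  have card_X : #X ≤ m * s := card_image_le.trans (by simp)
  let pattern (Y : Finset V) (i : Fin m) : Bool := decide (∃ t, (z i).1 t ∈ Y)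
  have subset : {σ | swapAt σ z ∈ ghostEvent (Fin m) fun (A : 𝒜) => {b | ∀ t, b t ∉ A.1}} ⊆
      (𝒜.image (X ∩ ·)).image pattern := by
    rintro σ ⟨A, hA⟩
    refine mem_coe.2 (mem_image.2 ⟨X ∩ A, mem_image_of_mem _ A.2, funext fun i => ?_⟩)
    have mem_X (t : Fin s) : (z i).1 t ∈ X := mem_image_of_mem _ (mem_univ (i, t))
    have hi := hA i
    cases hσ : σ i <;> simp_all [swapAt, pattern]
  calc _ ≤ #((𝒜.image (X ∩ ·)).image pattern) :=
        (Set.ncard_le_ncard subset).trans (Set.ncard_coe_finset _).le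
    _ ≤ #(𝒜.image (X ∩ ·)) := card_image_le
    _ ≤ (d + 1) * (m * s) ^ d := card_image_inter_le hd card_X hms

end DoubleSampling

section EpsNet

theorem pow_mul_natCast_mul_le_one {p q : ℝ≥0∞} (h : p + q = 1) (n : ℕ) :
    q ^ n * (n * p) ≤ 1 := by
  induction n with
  | zero => simp
  | succ n ih =>
    calc q ^ (n + 1) * ((n + 1 : ℕ) * p) = q * (q ^ n * (n * p)) + q ^ (n + 1) * p := by
          push_cast; ring
      _ ≤ q * 1 + 1 * p := by
          gcongr; exact pow_le_one' (h ▸ le_add_self) _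
      _ = 1 := by rw [mul_one, one_mul, add_comm, h]

/-- The number of blocks of sample points in an ε-net for sets of measure at least `1 / k` and
VC-dimension at most `d`. -/
def epsNetBlocks (k d : ℕ) : ℕ := 32 * k * (d + 1) ^ 4

/-- The size of an ε-net for sets of measure at least `1 / k` and VC-dimension at most `d`: with `m`
blocks of `2 * m * k` points, a single block misses a given set with probability at most
`1 / (2 * m)`. -/
def epsNetSize (k d : ℕ) : ℕ := epsNetBlocks k d * (2 * epsNetBlocks k d * k)

theorem two_mul_mul_epsNetSize_pow_lt {k : ℕ} (hk : 0 < k) (d : ℕ) :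
    2 * ((d + 1) * epsNetSize k d ^ d) < 2 ^ epsNetBlocks k d := by
  set a := 8 * k * (d + 1) ^ 3 with ha
  have block_eq : epsNetBlocks k d = a * 4 * (d + 1) := by rw [epsNetBlocks, ha]; ring
  have a_ge : 8 ≤ a := by
    have : 0 < k * (d + 1) ^ 3 := by positivity
    lia
  have base_le : epsNetSize k d ≤ a ^ 4 :=
    calc epsNetSize k d = 32 * k * (d + 1) ^ 2 * a ^ 2 := by
          rw [epsNetSize, block_eq]; ring
      _ ≤ 32 * k * (d + 1) ^ 3 * a ^ 2 := by gcongr <;> lia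
      _ = 4 * a ^ 3 := by rw [ha]; ring
      _ ≤ a * a ^ 3 := by gcongr; lia
      _ = a ^ 4 := by ring
  have factor_lt : 2 * (d + 1) < a ^ 4 :=
    calc 2 * (d + 1) ≤ 8 * k * (d + 1) := by gcongr; lia
      _ ≤ 8 * k * (d + 1) ^ 3 := by gcongr; exact Nat.le_self_pow (by simp) _
      _ < a ^ 4 := lt_self_pow₀ (by lia) (by simp)
  calc 2 * ((d + 1) * epsNetSize k d ^ d)
      = 2 * (d + 1) * epsNetSize k d ^ d := by ring
    _ ≤ 2 * (d + 1) * (a ^ 4) ^ d := by gcongr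
    _ < a ^ 4 * (a ^ 4) ^ d := by gcongr
    _ = (a ^ 4) ^ (d + 1) := by ring
    _ ≤ (2 ^ a) ^ (4 * (d + 1)) := by
      rw [← pow_mul]
      exact Nat.pow_le_pow_left a.lt_two_pow_self.le _
    _ = 2 ^ epsNetBlocks k d := by rw [← pow_mul, ← mul_assoc, block_eq]

variable {V : Type*} [MeasurableSpace V] {μ : Measure V} [IsProbabilityMeasure μ]

theorem mul_measure_pi_forall_notMem_le_one {A : Set V} (hA : MeasurableSet A) {k : ℕ}
    (hk : 0 < k) (heavy : (k : ℝ≥0∞)⁻¹ ≤ μ A) (n : ℕ) :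
    n * Measure.pi (fun _ : Fin (n * k) => μ) {b | ∀ t, b t ∉ A} ≤ 1 := by
  have pi_eq : {b : Fin (n * k) → V | ∀ t, b t ∉ A} = Set.univ.pi fun _ => Aᶜ := by
    ext; simp
  rw [pi_eq, Measure.pi_pi, Finset.prod_const, Finset.card_univ, Fintype.card_fin, mul_comm]
  calc μ Aᶜ ^ (n * k) * n = μ Aᶜ ^ (n * k) * ((n * k : ℕ) * (k : ℝ≥0∞)⁻¹) := by
        rw [Nat.cast_mul, mul_assoc (n : ℝ≥0∞), ENNReal.mul_inv_cancel (by simpa using hk.ne')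
          (by simp), mul_one]
    _ ≤ μ Aᶜ ^ (n * k) * ((n * k : ℕ) * μ A) := by gcongr
    _ ≤ 1 := pow_mul_natCast_mul_le_one (prob_add_prob_compl hA) _

theorem exists_card_le_epsNetSize [Countable V] [MeasurableSingletonClass V] [DecidableEq V]
    {𝒜 : Finset (Finset V)} {k d : ℕ} (hk : 0 < k) (hd : 𝒜.vcDim ≤ d)
    (heavy : ∀ A ∈ 𝒜, (k : ℝ≥0∞)⁻¹ ≤ μ A) :
    ∃ T : Finset V, #T ≤ epsNetSize k d ∧ ∀ A ∈ 𝒜, (T ∩ A).Nonempty := by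
  by_contra! no_net
  set m := epsNetBlocks k d with hm
  set s := 2 * m * k with hs
  have m_pos : 0 < m := by rw [hm, epsNetBlocks]; positivity
  have miss (x : Fin m → Fin s → V) : ∃ A : 𝒜, ∀ i, x i ∈ {b | ∀ t, b t ∉ A.1} := by
    obtain ⟨A, hA, disjoint⟩ := no_net (univ.image fun p : Fin m × Fin s => x p.1 p.2)
      (card_image_le.trans (by simp [epsNetSize, hm, hs]))
    refine ⟨⟨A, hA⟩, fun i t ht => notMem_empty (x i t) (disjoint ▸ mem_inter.2 ⟨?_, ht⟩)⟩
    exact mem_image_of_mem (fun p : Fin m × Fin s => x p.1 p.2) (mem_univ (i, t))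
  have two_pow_le := two_pow_card_le_of_forall_card_swapAt_le
    (ν := Measure.pi fun _ : Fin s => μ)
    (fun A => by
      simpa using mul_measure_pi_forall_notMem_le_one A.1.measurableSet hk (heavy A A.2) (2 * m))
    miss (ncard_swapAt_mem_ghostEvent_le hd (by positivity))
  rw [Fintype.card_fin] at two_pow_le
  exact two_pow_le.not_gt (two_mul_mul_epsNetSize_pow_lt hk d)

end EpsNet

section Sampling

variable {ι V : Type*} [Fintype ι] [MeasurableSpace V] [Countable V] [MeasurableSingletonClass V]
  {μ : Measure V} [IsProbabilityMeasure μ] {D : V → V → Set V} {β : ℝ≥0∞}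

theorem measure_pi_setOf_mem_le (hD : ∀ u v, μ (D u v) ≤ β) {i j k : ι} (hi : k ≠ i) (hj : k ≠ j) :
    Measure.pi (fun _ : ι => μ) {x | x k ∈ D (x i) (x j)} ≤ β := by
  classical
  have slice_le (x : ι → V) :
      (∫⋯∫⁻_{k}, {x | x k ∈ D (x i) (x j)}.indicator 1 ∂fun _ : ι => μ) x ≤ β := by
    rw [lmarginal_singleton]
    have slice_eq (v : V) : {x : ι → V | x k ∈ D (x i) (x j)}.indicator 1 (Function.update x k v) =
        (D (x i) (x j)).indicator (1 : V → ℝ≥0∞) v := by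
      simp [Set.indicator_apply, hi.symm, hj.symm]
    simpa [slice_eq, lintegral_indicator_one (MeasurableSet.of_discrete (s := D (x i) (x j)))]
      using hD (x i) (x j)
  calc Measure.pi (fun _ : ι => μ) {x | x k ∈ D (x i) (x j)}
      = ∫⁻ x, {x : ι → V | x k ∈ D (x i) (x j)}.indicator 1 x ∂Measure.pi fun _ => μ :=
        (lintegral_indicator_one .of_discrete).symm
    _ ≤ ∫⁻ _ : ι → V, β ∂Measure.pi fun _ => μ :=
        lintegral_le_of_lmarginal_le {k} (measurable_one.indicator .of_discrete)
          measurable_const fun x => by simpa [lmarginal_singleton] using slice_le x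
    _ = β := by simp

theorem exists_forall_notMem (hD : ∀ u v, μ (D u v) ≤ β) (hβ : Fintype.card ι ^ 3 * β < 1) :
    ∃ x : ι → V, ∀ i j k, k ≠ i → k ≠ j → x k ∉ D (x i) (x j) := by
  let bad (p : ι × ι × ι) : Set (ι → V) :=
    {x | p.2.2 ≠ p.1 ∧ p.2.2 ≠ p.2.1 ∧ x p.2.2 ∈ D (x p.1) (x p.2.1)}
  have bad_le (p : ι × ι × ι) : Measure.pi (fun _ : ι => μ) (bad p) ≤ β := by
    by_cases hp : p.2.2 ≠ p.1 ∧ p.2.2 ≠ p.2.1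
    · simpa [bad, hp] using measure_pi_setOf_mem_le hD hp.1 hp.2
    · simp [bad, ← and_assoc, hp]
  have union_lt : Measure.pi (fun _ : ι => μ) (⋃ p, bad p) < 1 :=
    calc Measure.pi (fun _ : ι => μ) (⋃ p, bad p)
        ≤ ∑ p, Measure.pi (fun _ : ι => μ) (bad p) := measure_iUnion_fintype_le _ _
      _ ≤ ∑ _ : ι × ι × ι, β := Finset.sum_le_sum fun p _ => bad_le p
      _ = Fintype.card ι ^ 3 * β := by simp; ring
      _ < 1 := hβ
  obtain ⟨x, hx⟩ : ∃ x, x ∉ ⋃ p, bad p := by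
    by_contra! mem
    rw [Set.eq_univ_of_forall mem, measure_univ] at union_lt
    exact union_lt.false
  exact ⟨x, fun i j k hi hj hk => hx (Set.mem_iUnion.2 ⟨(i, j, k), hi, hj, hk⟩)⟩

end Sampling

section Ramsey

theorem exists_isNClique_or_isNIndepSet {α : Type*} (G : SimpleGraph α) :
    ∀ (a b : ℕ) (s : Finset α), (a + b).choose a ≤ s.card →
      (∃ t ⊆ s, G.IsNClique a t) ∨ ∃ t ⊆ s, G.IsNIndepSet b t
  | 0, _, _, _ => .inl ⟨∅, Finset.empty_subset _, by simp⟩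
  | _ + 1, 0, _, _ => .inr ⟨∅, Finset.empty_subset _, by simp [isNIndepSet_iff]⟩
  | a + 1, b + 1, s, hs => by
    classical
    have pascal : (a + 1 + (b + 1)).choose (a + 1)
        = (a + (b + 1)).choose a + (a + 1 + b).choose (a + 1) := by
      rw [show a + 1 + (b + 1) = a + (b + 1) + 1 by ring, Nat.choose_succ_succ,
        show a + 1 + b = a + (b + 1) by ring]
    obtain ⟨v, hv⟩ : s.Nonempty :=
      Finset.card_pos.1 ((Nat.choose_pos (Nat.le_add_right _ _)).trans_le hs)
    have split := Finset.card_filter_add_card_filter_not (s := s.erase v) (G.Adj v)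
    rw [Finset.card_erase_of_mem hv] at split
    have mem_of_subset {p : α → Prop} [DecidablePred p] {t : Finset α}
        (ht : t ⊆ (s.erase v).filter p) {w : α} (hw : w ∈ t) : w ≠ v ∧ p w := by
      have := Finset.mem_filter.1 (ht hw)
      exact ⟨Finset.ne_of_mem_erase this.1, this.2⟩
    have insert_subset {p : α → Prop} [DecidablePred p] {t : Finset α}
        (ht : t ⊆ (s.erase v).filter p) : insert v t ⊆ s :=
      Finset.insert_subset hv
        (ht.trans ((Finset.filter_subset _ _).trans (Finset.erase_subset _ _)))
    obtain hN | hM : (a + (b + 1)).choose a ≤ ((s.erase v).filter (G.Adj v)).card ∨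
        (a + 1 + b).choose (a + 1) ≤ ((s.erase v).filter (¬ G.Adj v ·)).card := by lia
    · obtain ⟨t, ht, clique⟩ | ⟨t, ht, indep⟩ := exists_isNClique_or_isNIndepSet G a (b + 1) _ hN
      · exact .inl ⟨insert v t, insert_subset ht,
          clique.insert fun w hw => (mem_of_subset ht hw).2⟩
      · exact .inr ⟨t, (Finset.subset_insert v t).trans (insert_subset ht), indep⟩
    · obtain ⟨t, ht, clique⟩ | ⟨t, ht, indep⟩ := exists_isNClique_or_isNIndepSet G (a + 1) b _ hM
      · exact .inl ⟨t, (Finset.subset_insert v t).trans (insert_subset ht), clique⟩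
      · refine .inr ⟨insert v t, insert_subset ht, (isNClique_compl _).1 ?_⟩
        exact ((isNClique_compl _).2 indep).insert fun w hw =>
          (compl_adj ..).2 ⟨(mem_of_subset ht hw).1.symm, (mem_of_subset ht hw).2⟩

end Ramsey

section Walks

variable {V : Type*} {G : SimpleGraph V} {u v w : V}

theorem dist_le_dist_add_one_of_adj (h : G.Adj v w) : G.dist u w ≤ G.dist u v + 1 := by
  have := h.diff_dist_adj (u := u)
  lia

theorem dist_getVert_getVert_le (p : G.Walk u v) (s t : ℕ) :
    G.dist (p.getVert s) (p.getVert t) ≤ (s - t) + (t - s) := by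
  wlog h : s ≤ t generalizing s t
  · rw [SimpleGraph.dist_comm, add_comm]
    exact this t s (by lia)
  have := dist_le ((p.drop s).take (t - s))
  simp only [p.drop_getVert, (p.drop s).take_length, Nat.add_sub_cancel' h] at this
  lia

theorem dist_add_one_add_dist_le_length {W : Type*} {H : SimpleGraph W} (f : H →g G) {a b : W}
    {p : H.Walk a b} {e : H.Dart} (he : e ∈ p.darts) :
    G.dist (f a) (f e.fst) + 1 + G.dist (f e.snd) (f b) ≤ p.length := by
  induction p with
  | nil => simp at he
  | @cons a b c hab q ih =>
    rw [Walk.darts_cons, List.mem_cons] at he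
    rw [Walk.length_cons]
    obtain rfl | he := he
    · have := dist_le (q.map f)
      rw [Walk.length_map] at this
      simp only [dist_self]
      lia
    · have := ih he
      have := dist_le_dist_add_one_of_adj (u := f e.fst) (f.map_adj hab.symm)
      rw [SimpleGraph.dist_comm, SimpleGraph.dist_comm (v := f b)] at this
      lia

end Walks

section Geodesics

/-- The middle positions of a path of length `n`. When `n` is even they include both neighbours of
the midpoint, and `n = 0` gives the positions `0` and `1`, where `Walk.getVert` agrees. -/
def centralIndices (n : ℕ) : Finset ℕ := {(n - 1) / 2, n / 2, n / 2 + 1}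

variable {V I : Type*} {G : SimpleGraph V} {ℓ : ℕ} {x : I → V} {P : ∀ i j, G.Walk (x i) (x j)}

/-- The walks `P i j` are geodesics of length at most `2 * ℓ` joining the points `x i`, and no third
point `x k` lies within distance `ℓ` of the middle of `P i j`. -/
structure SeparatedGeodesics (G : SimpleGraph V) (ℓ : ℕ) (P : ∀ i j, G.Walk (x i) (x j)) :
    Prop where
  length_eq (i j : I) : (P i j).length = G.dist (x i) (x j)
  length_le (i j : I) : (P i j).length ≤ 2 * ℓ
  lt_dist {i j k : I} (hi : k ≠ i) (hj : k ≠ j) {t : ℕ}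
    (ht : t ∈ centralIndices (P i j).length) : ℓ < G.dist (x k) ((P i j).getVert t)

/-- No point `x l` is closer to `w` than `x k` is. -/
def IsNearest (G : SimpleGraph V) (x : I → V) (k : I) (w : V) : Prop :=
  ∀ l, G.dist (x k) w ≤ G.dist (x l) w

/-- The vertices on the walks `P i j` with `i` and `j` equal or adjacent in `H`. -/
def geodesicUnion (H : SimpleGraph I) (P : ∀ i j, G.Walk (x i) (x j)) : Set V :=
  {w | ∃ i j, (i = j ∨ H.Adj i j) ∧ w ∈ (P i j).support}

namespace SeparatedGeodesics

theorem lt_dist_of_ne (h : SeparatedGeodesics G ℓ P) {i k : I} (hk : k ≠ i) :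
    ℓ < G.dist (x k) (x i) := by
  have := h.lt_dist hk hk (t := 0) (by simp [centralIndices, h.length_eq])
  rwa [Walk.getVert_zero] at this

theorem dist_getVert_left (h : SeparatedGeodesics G ℓ P) {i j : I} {t : ℕ}
    (ht : t ≤ (P i j).length) : G.dist (x i) ((P i j).getVert t) = t := by
  have left := dist_getVert_getVert_le (P i j) 0 t
  have right := dist_getVert_getVert_le (P i j) t (P i j).length
  have triangle := (P i j).take t |>.reachable.dist_triangle_left (x j)
  rw [Walk.getVert_zero] at left
  rw [Walk.getVert_length] at right
  have := h.length_eq i j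
  lia

theorem dist_getVert_right (h : SeparatedGeodesics G ℓ P) {i j : I} {t : ℕ}
    (ht : t ≤ (P i j).length) : G.dist (x j) ((P i j).getVert t) = (P i j).length - t := by
  have right := dist_getVert_getVert_le (P i j) t (P i j).length
  have triangle := (P i j).take t |>.reachable.dist_triangle_left (x j)
  rw [Walk.getVert_length] at right
  have := h.length_eq i j
  have := h.dist_getVert_left ht
  rw [SimpleGraph.dist_comm]
  lia

theorem min_add_two_le_dist (h : SeparatedGeodesics G ℓ P) {i j k : I} (hi : k ≠ i) (hj : k ≠ j)
    {t : ℕ} (ht : t ≤ (P i j).length) :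
    min t ((P i j).length - t) + 2 ≤ G.dist (x k) ((P i j).getVert t) ∨
      min t ((P i j).length - t) = ℓ ∧ ℓ < G.dist (x k) ((P i j).getVert t) := by
  have lt_add {c : ℕ} (hc : c ∈ centralIndices (P i j).length) :
      ℓ < G.dist (x k) ((P i j).getVert t) + ((t - c) + (c - t)) := by
    have reachable : G.Reachable (x k) ((P i j).getVert t) :=
      (P k i).reachable.trans ((P i j).take t).reachable
    have triangle := reachable.dist_triangle_left ((P i j).getVert c)
    have central := h.lt_dist hi hj hc
    have step := dist_getVert_getVert_le (P i j) t c
    lia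
  have := h.length_le i j
  have below := lt_add (c := ((P i j).length - 1) / 2) (by simp [centralIndices])
  have middle := lt_add (c := (P i j).length / 2) (by simp [centralIndices])
  have above := lt_add (c := (P i j).length / 2 + 1) (by simp [centralIndices])
  lia

theorem adj_or_dist_eq_of_isNearest (h : SeparatedGeodesics G ℓ P) {H : SimpleGraph I} {w : V}
    (hw : w ∈ geodesicUnion H P) {k k' : I} (hk : IsNearest G x k w) (ne : k' ≠ k)
    (hk' : G.dist (x k') w ≤ G.dist (x k) w + 1) :
    (H.Adj k k' ∧ ∀ l, l ≠ k → l ≠ k' → ℓ < G.dist (x l) w) ∨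
      G.dist (x k) w = ℓ ∧ G.dist (x k') w = ℓ + 1 := by
  obtain ⟨i, j, hij, hw⟩ := hw
  obtain ⟨t, rfl, ht⟩ := Walk.mem_support_iff_exists_getVert.1 hw
  have dist_i := h.dist_getVert_left ht
  have dist_j := h.dist_getVert_right ht
  have nearest_i := hk i
  have nearest_j := hk j
  have far {l : I} (hi : l ≠ i) (hj : l ≠ j) := h.min_add_two_le_dist hi hj ht
  have k_mem : k = i ∨ k = j := by
    by_contra! hne
    have := far hne.1 hne.2
    lia
  by_cases k'_mem : k' = i ∨ k' = j
  · left
    have central : t ∈ centralIndices (P i j).length := by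
      simp only [centralIndices, Finset.mem_insert, Finset.mem_singleton]
      obtain ⟨rfl | rfl, rfl | rfl⟩ := And.intro k_mem k'_mem <;> lia
    have far_of_ne {l : I} (hi : l ≠ i) (hj : l ≠ j) := h.lt_dist hi hj central
    obtain ⟨rfl | rfl, rfl | rfl⟩ := And.intro k_mem k'_mem
    · exact absurd rfl ne
    · exact ⟨hij.resolve_left ne.symm, fun l => far_of_ne⟩
    · exact ⟨(hij.resolve_left ne).symm, fun l hl hl' => far_of_ne hl' hl⟩
    · exact absurd rfl ne
  · right
    rw [not_or] at k'_mem
    have := far k'_mem.1 k'_mem.2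
    lia

theorem lt_dist_add_one_add_dist (h : SeparatedGeodesics G ℓ P) {H : SimpleGraph I} {w w' : V}
    (hw : w ∈ geodesicUnion H P) (hw' : w' ∈ geodesicUnion H P) (adj : G.Adj w w') {k k' : I}
    (hk : IsNearest G x k w) (hk' : IsNearest G x k' w') (ne : k' ≠ k) {a b : I}
    (ha : H.Adj k k' → a ≠ k ∧ a ≠ k') (hb : H.Adj k k' → b ≠ k ∧ b ≠ k') :
    2 * ℓ < G.dist (x a) w + 1 + G.dist (x b) w' := by
  have step (l : I) := dist_le_dist_add_one_of_adj (u := x l) adj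
  have step' (l : I) := dist_le_dist_add_one_of_adj (u := x l) adj.symm
  have nearest (l : I) : G.dist (x k) w ≤ G.dist (x l) w := hk l
  have nearest' (l : I) : G.dist (x k') w' ≤ G.dist (x l) w' := hk' l
  obtain hle | hle : G.dist (x k') w ≤ G.dist (x k) w + 1 ∨
      G.dist (x k) w' ≤ G.dist (x k') w' + 1 := by grind
  · obtain ⟨hadj, far⟩ | _ := h.adj_or_dist_eq_of_isNearest hw hk ne hle
    · have := far a (ha hadj).1 (ha hadj).2
      have := far b (hb hadj).1 (hb hadj).2
      grind
    · grind
  · obtain ⟨hadj, far⟩ | _ := h.adj_or_dist_eq_of_isNearest hw' hk' ne.symm hle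
    · have := far a (ha hadj.symm).2 (ha hadj.symm).1
      have := far b (hb hadj.symm).2 (hb hadj.symm).1
      grind
    · grind

theorem mem_geodesicUnion (H : SimpleGraph I) (i : I) : x i ∈ geodesicUnion H P :=
  ⟨i, i, .inl rfl, (P i i).start_mem_support⟩

theorem eq_of_isNearest (h : SeparatedGeodesics G ℓ P) {k j : I} (hk : IsNearest G x k (x j)) :
    k = j := by
  by_contra ne
  have near := hk j
  have far := h.lt_dist_of_ne ne
  rw [dist_self] at near
  lia

theorem edist_induce_le (h : SeparatedGeodesics G ℓ P) {H : SimpleGraph I} {i j : I}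
    (adj : H.Adj i j) : (G.induce (geodesicUnion H P)).edist
      ⟨x i, mem_geodesicUnion H i⟩ ⟨x j, mem_geodesicUnion H j⟩ ≤ (2 * ℓ : ℕ) := by
  have support_subset : ∀ w ∈ (P i j).support, w ∈ geodesicUnion H P :=
    fun w hw => ⟨i, j, .inr adj, hw⟩
  let q := (P i j).induce (geodesicUnion H P) support_subset
  have length_q : q.length = (P i j).length :=
    (Walk.length_map _ q).symm.trans <|
      congrArg Walk.length ((P i j).map_induce support_subset)
  exact (edist_le q).trans (Nat.cast_le.2 (length_q ▸ h.length_le i j))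

theorem lt_edist_induce [Finite I] (h : SeparatedGeodesics G ℓ P) {H : SimpleGraph I} {i j : I}
    (two_lt : 2 < H.edist i j) : (2 * ℓ : ℕ) < (G.induce (geodesicUnion H P)).edist
      ⟨x i, mem_geodesicUnion H i⟩ ⟨x j, mem_geodesicUnion H j⟩ := by
  by_contra! hle
  obtain ⟨ne, not_adj, no_common⟩ := two_lt_edist_iff.1 two_lt
  obtain ⟨p, hp⟩ := exists_walk_of_edist_ne_top (hle.trans_lt (ENat.natCast_lt_top _)).ne
  rw [← hp, Nat.cast_le] at hle
  obtain ⟨e, he, ⟨k, near_i, hk⟩, snd_notMem⟩ := p.exists_boundary_dart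
    {w | ∃ k, (k = i ∨ H.Adj i k) ∧ IsNearest G x k w}
    ⟨i, .inl rfl, fun l => by simp⟩ (by
      rintro ⟨k, near_i, nearest⟩
      obtain rfl := h.eq_of_isNearest nearest
      exact near_i.elim ne.symm not_adj)
  obtain ⟨k', hk'⟩ : ∃ k', IsNearest G x k' e.snd :=
    have : Nonempty I := ⟨i⟩
    Finite.exists_min _
  obtain ⟨k'_ne, k'_not_adj⟩ := not_or.1 fun near => snd_notMem ⟨k', near, hk'⟩
  have k'_ne_k : k' ≠ k := by
    rintro rfl
    exact near_i.elim k'_ne k'_not_adj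
  have i_ne (adj : H.Adj k k') : i ≠ k ∧ i ≠ k' :=
    ⟨by rintro rfl; exact k'_not_adj adj, Ne.symm k'_ne⟩
  have j_ne (adj : H.Adj k k') : j ≠ k ∧ j ≠ k' := by
    refine ⟨by rintro rfl; exact near_i.elim ne.symm not_adj, ?_⟩
    rintro rfl
    obtain rfl | hik := near_i
    · exact not_adj adj
    · exact Set.eq_empty_iff_forall_notMem.1 no_common k ⟨hik, adj.symm⟩
  have lt := h.lt_dist_add_one_add_dist e.fst.2 e.snd.2 e.adj hk hk' k'_ne_k i_ne j_ne
  have le := dist_add_one_add_dist_le_length (Embedding.induce (geodesicUnion H P)).toHom he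
  rw [SimpleGraph.dist_comm (u := x j)] at lt
  exact absurd (lt.trans_le (le.trans hle)) (lt_irrefl _)

end SeparatedGeodesics

end Geodesics

section Incidence

/-- The bipartite graph joining each finite set of elements of `α` to its members. -/
def membershipGraph (α : Type*) : SimpleGraph (α ⊕ Finset α) where
  Adj
    | .inl a, .inr s => a ∈ s
    | .inr s, .inl a => a ∈ s
    | _, _ => False
  symm := ⟨by rintro (a | s) (b | t) h <;> exact h⟩
  loopless := ⟨by rintro (a | s) h <;> exact h⟩

variable {α : Type*}

theorem two_lt_edist_membershipGraph {a : α} {s : Finset α} (ha : a ∉ s) :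
    2 < (membershipGraph α).edist (.inr s) (.inl a) := by
  refine two_lt_edist_iff.2 ⟨Sum.inr_ne_inl, ha, Set.eq_empty_of_forall_notMem ?_⟩
  rintro (b | t) ⟨hb, ht⟩
  · exact ht
  · exact hb

theorem SeparatedGeodesics.exists_bShattered {V : Type*} [Finite α] {G : SimpleGraph V} {ℓ : ℕ}
    {x : α ⊕ Finset α → V} {P : ∀ i j, G.Walk (x i) (x j)} (h : SeparatedGeodesics G ℓ P) :
    ∃ (S : Set V) (X : Set S), BShattered (G.induce S) X ∧ X.ncard = Nat.card α := by
  classical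
  let H := membershipGraph α
  let y (i : α ⊕ Finset α) : geodesicUnion H P := ⟨x i, mem_geodesicUnion H i⟩
  have injective_y : Function.Injective fun a => y (.inl a) := by
    intro a b hab
    by_contra ne
    have := h.lt_dist_of_ne (Sum.inl_injective.ne ne)
    rw [show x (.inl a) = x (.inl b) from congrArg Subtype.val hab, dist_self] at this
    exact absurd this (Nat.not_lt_zero ℓ)
  refine ⟨geodesicUnion H P, Set.range fun a => y (.inl a), fun Y hY => ?_,
    Set.ncard_range_of_injective injective_y⟩
  let s : Finset α := (Set.toFinite {a | y (.inl a) ∈ Y}).toFinset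
  have mem_s {a : α} : a ∈ s ↔ y (.inl a) ∈ Y := by simp [s]
  have mem_gball {a : α} : y (.inl a) ∈ gball (G.induce _) (y (.inr s)) (2 * ℓ) ↔ a ∈ s := by
    refine ⟨fun near => ?_, fun ha => h.edist_induce_le (show H.Adj (.inr s) (.inl a) from ha)⟩
    by_contra ha
    exact (h.lt_edist_induce (two_lt_edist_membershipGraph ha)).not_ge near
  refine ⟨y (.inr s), 2 * ℓ, Set.ext fun w => ⟨?_, fun hw => ?_⟩⟩
  · rintro ⟨near, a, rfl⟩
    exact mem_s.1 (mem_gball.1 near)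
  · obtain ⟨a, rfl⟩ := hY hw
    exact ⟨mem_gball.2 (mem_s.2 hw), a, rfl⟩

end Incidence

section Scattered

variable {V ι : Type*} {G : SimpleGraph V} {ℓ : ℕ} {x : ι → V}

/-- Any two points `x i`, `x j` in the same component are joined by a geodesic whose middle is not
within distance `ℓ` of a third point `x k`. -/
def IsScattered (G : SimpleGraph V) (ℓ : ℕ) (x : ι → V) : Prop :=
  ∀ i j, G.Reachable (x i) (x j) → ∃ p : G.Walk (x i) (x j), p.length = G.dist (x i) (x j) ∧
    ∀ k, k ≠ i → k ≠ j → ∀ t ∈ centralIndices p.length, x k ∉ gball G (p.getVert t) ℓ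

theorem IsScattered.comp {κ : Type*} (hx : IsScattered G ℓ x) {f : κ → ι}
    (hf : Function.Injective f) : IsScattered G ℓ (x ∘ f) := fun i j hij => by
  obtain ⟨p, hp, far⟩ := hx (f i) (f j) hij
  exact ⟨p, hp, fun k hi hj => far (f k) (hf.ne hi) (hf.ne hj)⟩

theorem mem_gball_self (G : SimpleGraph V) (v : V) (k : ℕ) : v ∈ gball G v k := by
  simp [gball]

theorem mem_gball_comm {u v : V} : u ∈ gball G v ℓ ↔ v ∈ gball G u ℓ := by
  simp only [gball, Set.mem_ofPred_eq, edist_comm]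

theorem exists_walk_length_le_of_not_disjoint_gball {u v : V}
    (h : ¬ Disjoint (gball G u ℓ) (gball G v ℓ)) : ∃ p : G.Walk u v, p.length ≤ 2 * ℓ := by
  obtain ⟨w, hu, hv⟩ := Set.not_disjoint_iff.1 h
  obtain ⟨p, hp⟩ := exists_walk_of_edist_ne_top (hu.trans_lt (ENat.natCast_lt_top _)).ne
  obtain ⟨q, hq⟩ := exists_walk_of_edist_ne_top (hv.trans_lt (ENat.natCast_lt_top _)).ne
  have hpℓ : p.length ≤ ℓ := Nat.cast_le.1 (hp.trans_le hu)
  have hqℓ : q.length ≤ ℓ := Nat.cast_le.1 (hq.trans_le hv)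
  refine ⟨p.append q.reverse, ?_⟩
  rw [Walk.length_append, Walk.length_reverse]
  lia

theorem IsScattered.exists_separatedGeodesics (hx : IsScattered G ℓ x)
    (meet : ∀ i j, ¬ Disjoint (gball G (x i) ℓ) (gball G (x j) ℓ)) :
    ∃ P : ∀ i j, G.Walk (x i) (x j), SeparatedGeodesics G ℓ P := by
  choose q hq using fun i j => exists_walk_length_le_of_not_disjoint_gball (meet i j)
  choose P length_P far using fun i j => hx i j (q i j).reachable
  refine ⟨P, length_P, fun i j => ?_, fun {i j k} hi hj {t} ht => ?_⟩
  · exact (length_P i j).trans_le ((dist_le _).trans (hq i j))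
  · have reachable : G.Reachable (x k) ((P i j).getVert t) :=
      (q k i).reachable.trans ((P i j).take t).reachable
    have := far i j k hi hj t ht
    rwa [gball, Set.mem_ofPred_eq, not_le, edist_comm, ← reachable.coe_dist_eq_edist,
      Nat.cast_lt] at this

theorem card_le_packingNumber [Fintype V] {C : Finset V}
    (hC : (C : Set V).Pairwise fun u w => Disjoint (gball G u ℓ) (gball G w ℓ)) :
    C.card ≤ packingNumber G ℓ :=
  le_csSup ⟨Fintype.card V, by rintro _ ⟨C', rfl, -⟩; exact C'.card_le_univ⟩ ⟨C, rfl, hC⟩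

theorem card_le_packingNumber_of_pairwise [Fintype V] {t : Finset ι}
    (ht : (t : Set ι).Pairwise fun i j => Disjoint (gball G (x i) ℓ) (gball G (x j) ℓ)) :
    t.card ≤ packingNumber G ℓ := by
  classical
  have injOn : Set.InjOn x t := by
    intro i hi j hj hij
    by_contra ne
    exact Set.disjoint_left.1 (ht hi hj ne) (mem_gball_self ..) (hij ▸ mem_gball_self ..)
  rw [← Finset.card_image_of_injOn injOn]
  refine card_le_packingNumber ?_
  rw [Finset.coe_image]
  exact injOn.pairwise_image.2 ht

/-- A Ramsey bound forcing, among that many points, either `ν + 1` with pairwise disjoint balls or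
`d + 1 + 2 ^ (d + 1)` (a `(d + 1)`-set and its subsets) with pairwise intersecting balls. -/
def sampleSize (ν d : ℕ) : ℕ :=
  (d + 1 + 2 ^ (d + 1) + (ν + 1)).choose (d + 1 + 2 ^ (d + 1))

theorem IsScattered.card_lt [Fintype V] [Fintype ι] (hx : IsScattered G ℓ x) {d : ℕ}
    (hG : distVCdimLE G d) : Fintype.card ι < sampleSize (packingNumber G ℓ) d := by
  by_contra! large
  let meeting : SimpleGraph ι := SimpleGraph.fromRel fun i j =>
    ¬ Disjoint (gball G (x i) ℓ) (gball G (x j) ℓ)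
  obtain ⟨t, -, clique, card_t⟩ | ⟨t, -, indep, card_t⟩ :=
    exists_isNClique_or_isNIndepSet meeting _ _ Finset.univ large
  · let α := Fin (d + 1)
    have e : α ⊕ Finset α ≃ t := Fintype.equivOfCardEq (by simp [α, card_t])
    obtain ⟨P, hP⟩ := (hx.comp (Subtype.val_injective.comp e.injective)).exists_separatedGeodesics
      (fun i j => by
        obtain rfl | ne := eq_or_ne i j
        · exact Set.not_disjoint_iff.2 ⟨_, mem_gball_self .., mem_gball_self ..⟩
        · have := clique (e i).2 (e j).2 (Subtype.val_injective.ne (e.injective.ne ne))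
          simpa [meeting, disjoint_comm] using this.2)
    obtain ⟨S, X, shattered, card_X⟩ := hP.exists_bShattered
    have := hG S X shattered
    rw [Nat.card_fin] at card_X
    lia
  · have card_le : t.card ≤ packingNumber G ℓ :=
      card_le_packingNumber_of_pairwise (x := x) fun i hi j hj ne => by
        simpa [meeting, ne, disjoint_comm] using indep hi hj ne
    lia

theorem exists_measure_le_forall_gball_subset [MeasurableSpace V] {μ : Measure V} {β : ℝ≥0∞}
    (light : ∀ v, μ (gball G v ℓ) ≤ β) (u v : V) : ∃ D : Set V, μ D ≤ 3 * β ∧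
      (G.Reachable u v → ∃ p : G.Walk u v, p.length = G.dist u v ∧
        ∀ t ∈ centralIndices p.length, gball G (p.getVert t) ℓ ⊆ D) := by
  by_cases huv : G.Reachable u v
  · obtain ⟨p, hp⟩ := huv.exists_walk_length_eq_dist
    refine ⟨⋃ t ∈ centralIndices p.length, gball G (p.getVert t) ℓ, ?_, fun _ =>
      ⟨p, hp, fun t ht => Set.subset_biUnion_of_mem (u := fun t => gball G (p.getVert t) ℓ) ht⟩⟩
    calc μ (⋃ t ∈ centralIndices p.length, gball G (p.getVert t) ℓ)
        ≤ ∑ t ∈ centralIndices p.length, μ (gball G (p.getVert t) ℓ) :=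
          measure_biUnion_finset_le _ _
      _ ≤ (centralIndices p.length).card • β := Finset.sum_le_card_nsmul _ _ _ fun t _ => light _
      _ ≤ 3 * β := by
          rw [nsmul_eq_mul]
          gcongr
          exact_mod_cast Finset.card_le_three
  · exact ⟨∅, by simp, fun h => absurd h huv⟩

theorem exists_isScattered [MeasurableSpace V] [Countable V] [MeasurableSingletonClass V]
    {μ : Measure V} [IsProbabilityMeasure μ] {β : ℝ≥0∞}
    (light : ∀ v, μ (gball G v ℓ) ≤ β) (ι : Type*) [Fintype ι]
    (hβ : (Fintype.card ι : ℝ≥0∞) ^ 3 * (3 * β) < 1) : ∃ x : ι → V, IsScattered G ℓ x := by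
  choose D measure_D subset_D using exists_measure_le_forall_gball_subset light
  obtain ⟨x, hx⟩ := exists_forall_notMem measure_D hβ
  refine ⟨x, fun i j hij => ?_⟩
  obtain ⟨p, hp, subset⟩ := subset_D _ _ hij
  exact ⟨p, hp, fun k hi hj t ht hk => hx i j k hi hj (subset t ht hk)⟩

/-- An `N` such that every probability measure gives some ball mass at least `1 / N`, for packing
number `ν` and distance VC-dimension at most `d`. -/
def ballMassBound (ν d : ℕ) : ℕ := 3 * sampleSize ν d ^ 3 + 1

theorem ballMassBound_pos (ν d : ℕ) : 0 < ballMassBound ν d :=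
  Nat.succ_pos _

theorem exists_inv_ballMassBound_le_measure_gball [Fintype V] [MeasurableSpace V]
    [MeasurableSingletonClass V] {d : ℕ} (hG : distVCdimLE G d) (μ : Measure V)
    [IsProbabilityMeasure μ] :
    ∃ v, (ballMassBound (packingNumber G ℓ) d : ℝ≥0∞)⁻¹ ≤ μ (gball G v ℓ) := by
  by_contra! light
  obtain ⟨x, hx⟩ := exists_isScattered (fun v => (light v).le)
    (Fin (sampleSize (packingNumber G ℓ) d)) (by
      rw [Fintype.card_fin, ← mul_assoc, ← div_eq_mul_inv]
      refine ENNReal.div_lt_of_lt_mul' ?_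
      rw [mul_one]
      norm_cast
      rw [ballMassBound]
      lia)
  simpa using hx.card_lt hG

end Scattered

section BallHypergraph

theorem edist_map_le {V W : Type*} {G : SimpleGraph V} {H : SimpleGraph W} (f : G →g H) (u v : V) :
    H.edist (f u) (f v) ≤ G.edist u v :=
  le_iInf fun p => (edist_le (p.map f)).trans_eq (congrArg _ (p.length_map f))

theorem edist_iso {V W : Type*} {G : SimpleGraph V} {H : SimpleGraph W} (e : G ≃g H) (u v : V) :
    H.edist (e u) (e v) = G.edist u v :=
  (edist_map_le e.toHom u v).antisymm <| by simpa using edist_map_le e.symm.toHom (e u) (e v)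

theorem BShattered.image_iso {V W : Type*} {G : SimpleGraph V} {H : SimpleGraph W} {X : Set V}
    (hX : BShattered G X) (e : G ≃g H) : BShattered H (e '' X) := by
  intro Y hY
  obtain ⟨Z, hZ, rfl⟩ := Set.subset_image_iff.1 hY
  obtain ⟨v, k, rfl⟩ := hX Z hZ
  refine ⟨e v, k, ?_⟩
  have gball_eq : gball H (e v) k = e '' gball G v k := by
    ext w
    obtain ⟨w, rfl⟩ := e.surjective w
    simp [gball, edist_iso]
  rw [gball_eq, Set.image_inter e.injective]

theorem BShattered.ncard_le {V : Type*} {G : SimpleGraph V} {X : Set V} {d : ℕ}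
    (hX : BShattered G X) (hG : distVCdimLE G d) : X.ncard ≤ d := by
  rw [← Set.ncard_image_of_injective X (induceUnivIso G).symm.injective]
  exact hG _ _ (hX.image_iso (induceUnivIso G).symm)

variable {V : Type*} [Fintype V] {G : SimpleGraph V} {ℓ d : ℕ}

/-- The hyperedges of the `B_ℓ`-hypergraph of `G`. -/
noncomputable def ballFamily [DecidableEq V] (G : SimpleGraph V) (ℓ : ℕ) : Finset (Finset V) :=
  Finset.univ.image fun v => (gball G v ℓ).toFinite.toFinset

theorem vcDim_ballFamily_le [DecidableEq V] (hG : distVCdimLE G d) :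
    (ballFamily G ℓ).vcDim ≤ d := by
  refine Finset.sup_le fun X hX => ?_
  rw [← Set.ncard_coe_finset]
  refine BShattered.ncard_le (fun Y hY => ?_) hG
  lift Y to Finset V using Set.toFinite Y
  obtain ⟨A, hA, hXA⟩ := Finset.mem_shatterer.1 hX (Finset.coe_subset.1 hY)
  obtain ⟨v, -, rfl⟩ := Finset.mem_image.1 hA
  refine ⟨v, ℓ, ?_⟩
  rw [← hXA, Finset.coe_inter, Set.Finite.coe_toFinset, Set.inter_comm]

theorem transversality_le_card {T : Finset V} (hT : ∀ v, ∃ t ∈ T, t ∈ gball G v ℓ) :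
    transversality G ℓ ≤ T.card :=
  Nat.sInf_le ⟨T, rfl, hT⟩

/-- The number of `ℓ`-balls that suffice to cover a graph of packing number `ν` and distance
VC-dimension at most `d`; this is the `f (ν, d)` of the theorem. -/
def coverBound (ν d : ℕ) : ℕ := epsNetSize (ballMassBound ν d) d

theorem exists_measure_forall_inv_ballMassBound_le [Nonempty V] [MeasurableSpace V]
    [MeasurableSingletonClass V] (hG : distVCdimLE G d) (ℓ : ℕ) :
    ∃ μ : Measure V, IsProbabilityMeasure μ ∧
      ∀ v, (ballMassBound (packingNumber G ℓ) d : ℝ≥0∞)⁻¹ ≤ μ (gball G v ℓ) := by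
  obtain ⟨μ, hμ, heavy⟩ := exists_measure_forall_le_of_forall_measure
    (r := fun u v => v ∈ gball G u ℓ)
    (ENNReal.inv_ne_top.2 (Nat.cast_ne_zero.2 (ballMassBound_pos _ _).ne'))
    fun μ _ => exists_inv_ballMassBound_le_measure_gball hG μ
  refine ⟨μ, hμ, fun v => ?_⟩
  simpa only [mem_gball_comm (u := v), Set.ofPred_mem_eq] using heavy v

theorem transversality_le_coverBound (hG : distVCdimLE G d) :
    transversality G ℓ ≤ coverBound (packingNumber G ℓ) d := by
  classical
  obtain _ | _ := isEmpty_or_nonempty V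
  · exact (transversality_le_card (T := ∅) isEmptyElim).trans (Nat.zero_le _)
  let _ : MeasurableSpace V := ⊤
  have : DiscreteMeasurableSpace V := ⟨fun _ => trivial⟩
  obtain ⟨μ, _, heavy⟩ := exists_measure_forall_inv_ballMassBound_le hG ℓ
  obtain ⟨T, card_T, hits⟩ := exists_card_le_epsNetSize (μ := μ) (ballMassBound_pos _ _)
    (vcDim_ballFamily_le hG) (Finset.forall_mem_image.2 fun v _ => by simpa using heavy v)
  refine (transversality_le_card fun v => ?_).trans card_T
  obtain ⟨t, ht⟩ := hits _ (Finset.mem_image_of_mem _ (Finset.mem_univ v))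
  obtain ⟨htT, htv⟩ := Finset.mem_inter.1 ht
  exact ⟨t, htT, (Set.Finite.mem_toFinset _).1 htv⟩

end BallHypergraph

theorem stmt0 :
    ∃ f : ℕ → ℕ → ℕ, ∀ (ℓ d : ℕ) (V : Type) (_ : Fintype V) (G : SimpleGraph V),
      distVCdimLE G d → transversality G ℓ ≤ f (packingNumber G ℓ) d :=
  ⟨coverBound, fun _ _ _ _ _ hG => transversality_le_coverBound hG⟩
end

section
/- Let T be a tree in which every node has degree 1 or 3, and suppose α > 2 of its leaves are labeled. Then T has an edge e such that each of the two connected components of T − e contains at least α/3 labeled leaves. -/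
open SimpleGraph

/-!
Let `v` be a median of the labeled leaves, a vertex minimizing the sum of the distances to them.
Moving from `v` to a neighbor `a` lowers the distance to the labels beyond the edge `va` by one and
raises the distance to the others by one, so by minimality at most half of the labels lie beyond
`va`. It remains to find an edge `va` with at least a third of the labels beyond it. If `v` is
unlabeled, its at most three neighbors share all the labels, so one of the edges at `v` will do. If
`v` is a labeled leaf, all the other labels lie beyond its only edge. In a tree, the component of
`a` in `T - va` consists of the vertices that are closer to `a` than to `v`, so that only distances
need to be compared.
-/

section Distance

variable {V : Type*} {G : SimpleGraph V} {u v x : V}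

lemma exists_adj_dist_lt (hr : G.Reachable x v) (hne : x ≠ v) :
    ∃ a, G.Adj v a ∧ G.dist x a < G.dist x v := by
  obtain ⟨p, hp⟩ := hr.symm.exists_walk_length_eq_dist
  cases p with
  | nil => exact absurd rfl hne
  | @cons _ a _ hva q =>
    refine ⟨a, hva, ?_⟩
    calc G.dist x a = G.dist a x := dist_comm
      _ ≤ q.length := dist_le q
      _ < (q.cons hva).length := q.length.lt_succ_self
      _ = G.dist x v := hp.trans dist_comm

lemma reachable_deleteEdges_of_dist_lt (hr : G.Reachable x u) (h : G.dist x u < G.dist x v) :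
    (G.deleteEdges {s(u, v)}).Reachable x u := by
  classical
  obtain ⟨p, hp⟩ := hr.exists_walk_length_eq_dist
  refine reachable_deleteEdges_iff_exists_walk.mpr ⟨p, fun he ↦ h.not_ge ?_⟩
  have hv : v ∈ p.support := p.snd_mem_support_of_mem_edges he
  calc G.dist x v ≤ (p.takeUntil v hv).length := dist_le _
    _ ≤ p.length := p.length_takeUntil_le_length hv
    _ = G.dist x u := hp

lemma reachable_deleteEdges_iff_dist_lt (hG : G.IsTree) (huv : G.Adj u v) :
    (G.deleteEdges {s(u, v)}).Reachable x u ↔ G.dist x u < G.dist x v := by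
  refine ⟨fun hu ↦ ?_, reachable_deleteEdges_of_dist_lt (hG.connected x u)⟩
  by_contra hlt
  have hvu : G.dist x v < G.dist x u :=
    (not_lt.mp hlt).lt_of_ne (hG.dist_ne_of_adj x huv).symm
  have hv := reachable_deleteEdges_of_dist_lt (hG.connected x v) hvu
  rw [Sym2.eq_swap] at hv
  exact isBridge_iff.mp (isAcyclic_iff_forall_adj_isBridge.mp hG.isAcyclic huv) (hu.symm.trans hv)

end Distance

section Median

variable {V : Type*} {G : SimpleGraph V} {S : Finset V} {u v : V}

/-- The part in `S` of the half-space `W_uv` of metric graph theory: the elements of `S` that are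
closer to `u` than to `v`. For an edge `uv` of a tree these are the elements of `S` in the
component of `u` after deletion of that edge. -/
noncomputable def closerTo (G : SimpleGraph V) (S : Finset V) (u v : V) : Finset V :=
  {x ∈ S | G.dist x u < G.dist x v}

/-- A median of the finite set `S`: a vertex minimizing the sum of the distances to the elements
of `S`. It need not belong to `S`. -/
def IsMedian (G : SimpleGraph V) (S : Finset V) (v : V) : Prop :=
  ∀ u, ∑ x ∈ S, G.dist x v ≤ ∑ x ∈ S, G.dist x u

lemma exists_isMedian [Nonempty V] (G : SimpleGraph V) (S : Finset V) : ∃ v, IsMedian G S v :=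
  ⟨_, fun u ↦ Function.argmin_le (fun v ↦ ∑ x ∈ S, G.dist x v) u⟩

lemma sum_dist_add_card_closerTo (S : Finset V) (huv : G.Adj u v) :
    ∑ x ∈ S, G.dist x u + (closerTo G S u v).card =
      ∑ x ∈ S, G.dist x v + (closerTo G S v u).card := by
  simp only [closerTo, Finset.card_filter, ← Finset.sum_add_distrib]
  refine Finset.sum_congr rfl fun x _ ↦ ?_
  have := huv.diff_dist_adj (u := x)
  grind

lemma IsMedian.card_closerTo_le (hv : IsMedian G S v) (huv : G.Adj u v) :
    (closerTo G S u v).card ≤ (closerTo G S v u).card := by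
  have := sum_dist_add_card_closerTo S huv
  have := hv u
  omega

lemma exists_adj_card_erase_le_mul_card_closerTo [DecidableEq V] (hG : G.Connected) {k : ℕ}
    (hk : (G.neighborSet v).encard ≤ k) (hS : (S.erase v).Nonempty) :
    ∃ a, G.Adj v a ∧ (S.erase v).card ≤ k * (closerTo G S a v).card := by
  obtain ⟨N, hN⟩ := (Set.finite_of_encard_le_coe hk).exists_finset_coe
  have mem_N (a : V) : a ∈ N ↔ G.Adj v a := by
    rw [← Finset.mem_coe, hN, mem_neighborSet]
  have hNk : N.card ≤ k := by
    rwa [← hN, Set.encard_coe_eq_coe_finsetCard, Nat.cast_le] at hk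
  have hcover : S.erase v ⊆ N.biUnion fun a ↦ closerTo G S a v := by
    intro x hx
    obtain ⟨hxv, hxS⟩ := Finset.mem_erase.mp hx
    obtain ⟨a, hva, hlt⟩ := exists_adj_dist_lt (hG x v) hxv
    exact Finset.mem_biUnion.mpr ⟨a, (mem_N a).mpr hva, Finset.mem_filter.mpr ⟨hxS, hlt⟩⟩
  have hN_ne : N.Nonempty := (Finset.biUnion_nonempty.mp (hS.mono hcover)).imp fun _ h ↦ h.1
  obtain ⟨a, haN, hmax⟩ := N.exists_max_image (fun a ↦ (closerTo G S a v).card) hN_ne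
  refine ⟨a, (mem_N a).mp haN, ?_⟩
  calc (S.erase v).card ≤ (N.biUnion fun a ↦ closerTo G S a v).card := Finset.card_le_card hcover
    _ ≤ N.card * (closerTo G S a v).card := Finset.card_biUnion_le_card_mul _ _ _ hmax
    _ ≤ k * (closerTo G S a v).card := Nat.mul_le_mul_right _ hNk

lemma exists_adj_card_le_mul_card_closerTo (hG : G.Connected) {k : ℕ} (hk : 2 ≤ k)
    (hv : (G.neighborSet v).encard ≤ k) (hleaf : v ∈ S → (G.neighborSet v).encard ≤ 1)
    (hS : 2 ≤ S.card) : ∃ a, G.Adj v a ∧ S.card ≤ k * (closerTo G S a v).card := by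
  classical
  have hne : (S.erase v).Nonempty :=
    (Finset.one_lt_card_iff_nontrivial.mp hS).erase_nonempty
  by_cases hvS : v ∈ S
  · obtain ⟨a, hva, ha⟩ :=
      exists_adj_card_erase_le_mul_card_closerTo hG (k := 1) (hleaf hvS) hne
    refine ⟨a, hva, ?_⟩
    rw [Finset.card_erase_of_mem hvS] at ha
    calc S.card ≤ 2 * (closerTo G S a v).card := by omega
      _ ≤ k * (closerTo G S a v).card := Nat.mul_le_mul_right _ hk
  · simpa only [Finset.erase_eq_of_notMem hvS] using
      exists_adj_card_erase_le_mul_card_closerTo hG hv hne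

end Median

lemma ncard_reachable_deleteEdges {V : Type*} {T : SimpleGraph V} (hT : T.IsTree) (S : Finset V)
    {u v : V} (huv : T.Adj u v) :
    {x ∈ (S : Set V) | (T.deleteEdges {s(u, v)}).Reachable x u}.ncard =
      (closerTo T S u v).card := by
  simp only [reachable_deleteEdges_iff_dist_lt hT huv, ← Set.ncard_coe_finset, closerTo,
    Finset.coe_filter, Finset.mem_coe]

theorem stmt11_general {L : Type*} (T : SimpleGraph L) (hT : T.IsTree) {k : ℕ} (hk : 2 ≤ k)
    (hdeg : ∀ t : L, (T.neighborSet t).encard ≤ k)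
    (labeled : Set L) (hleaf : ∀ t ∈ labeled, (T.neighborSet t).encard ≤ 1)
    (hcard : 2 ≤ labeled.ncard) :
    ∃ t₁ t₂ : L, T.Adj t₁ t₂ ∧
      labeled.ncard ≤ k * {v ∈ labeled | (T.deleteEdges {s(t₁, t₂)}).Reachable v t₁}.ncard ∧
      labeled.ncard ≤ k * {v ∈ labeled | (T.deleteEdges {s(t₁, t₂)}).Reachable v t₂}.ncard := by
  have hfin : labeled.Finite := Set.finite_of_ncard_pos (by omega)
  lift labeled to Finset L using hfin
  rw [Set.ncard_coe_finset] at hcard ⊢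
  have := hT.connected.nonempty
  obtain ⟨v, hv⟩ := exists_isMedian T labeled
  obtain ⟨a, hva, ha⟩ :=
    exists_adj_card_le_mul_card_closerTo hT.connected hk (hdeg v) (hleaf v) hcard
  refine ⟨a, v, hva.symm, ?_, ?_⟩
  · rwa [ncard_reachable_deleteEdges hT labeled hva.symm]
  · rw [Sym2.eq_swap, ncard_reachable_deleteEdges hT labeled hva]
    exact ha.trans (Nat.mul_le_mul_left k (hv.card_closerTo_le hva.symm))

/-- Lemma `separationtree`: if `T` is a tree in which every node has degree 1
or 3 and `α > 2` of its leaves are labeled, then `T` has an edge such that both connected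
components obtained by deleting it contain at least `α/3` labeled leaves. -/
theorem stmt11 {L : Type*} [Fintype L] (T : SimpleGraph L) (hT : T.IsTree)
    (hdeg : ∀ t : L, (T.neighborSet t).ncard = 1 ∨ (T.neighborSet t).ncard = 3)
    (labeled : Set L) (hleaf : ∀ t ∈ labeled, (T.neighborSet t).ncard = 1)
    (α : ℕ) (hα : 2 < α) (hcard : labeled.ncard = α) :
    ∃ t₁ t₂ : L, T.Adj t₁ t₂ ∧
      α ≤ 3 * {v ∈ labeled | (T.deleteEdges {s(t₁, t₂)}).Reachable v t₁}.ncard ∧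
      α ≤ 3 * {v ∈ labeled | (T.deleteEdges {s(t₁, t₂)}).Reachable v t₂}.ncard := by
  subst hcard
  have encard_le {t : L} {n : ℕ} (h : (T.neighborSet t).ncard ≤ n) :
      (T.neighborSet t).encard ≤ n :=
    Set.encard_le_coe_iff_finite_ncard_le.mpr ⟨Set.toFinite _, h⟩
  exact stmt11_general T hT (k := 3) (by norm_num) (fun t ↦ encard_le (by grind)) labeled
    (fun t ht ↦ mod_cast encard_le (hleaf t ht).le) hα.le
end

section
/- For every integer ℓ ≥ 0, every planar graph of diameter at most 2ℓ has a dominating set at distance ℓ of size at most 35200; equivalently, it can be covered by at most 35200 balls of radius ℓ. -/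
open SimpleGraph

/-- `G` has an `H`-minor: there is a family of pairwise disjoint, nonempty, connected branch
sets in `G` indexed by the vertices of `H`, with an edge of `G` between the branch sets of any
two adjacent vertices of `H`. -/
def HasMinor {V W : Type*} (G : SimpleGraph V) (H : SimpleGraph W) : Prop :=
  ∃ X : W → Set V,
    (∀ i, (G.induce (X i)).Connected) ∧
    (Pairwise fun i j => Disjoint (X i) (X j)) ∧
    ∀ i j, H.Adj i j → ∃ u ∈ X i, ∃ v ∈ X j, G.Adj u v

/-- `G` is planar.  By Wagner's theorem, a graph is planar iff it has neither a `K₅` minor nor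
a `K₃,₃` minor; we use this characterization as the definition. -/
def IsPlanar {V : Type*} (G : SimpleGraph V) : Prop :=
  ¬ HasMinor G (completeGraph (Fin 5)) ∧
  ¬ HasMinor G (completeBipartiteGraph (Fin 3) (Fin 3))

/-
Suppose that, among five vertices, every two have a common point of their balls of radius `ℓ` that
lies in none of the other three balls. Then the Voronoi cells of the five vertices are the branch
sets of a `K₅` minor. So in a planar graph no five vertices are of this kind, and in particular
the balls have VC dimension at most 4.

Any two of the balls do meet, at the midpoint of a geodesic. Draw five centres independently from a
distribution for which every vertex is in the random ball with probability at most 1/81. For each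
centre and each pair of other centres (at most 5 * 4² = 80 choices), the probability that the ball
contains the midpoint of the pair is at most 1/81, so with positive probability this never happens,
which is the excluded configuration. By the minimax theorem there is then a probability measure on
the vertices giving every ball mass at least 1/81, and an ε-net for this measure meets all balls.
The double sampling argument of Haussler and Welzl, with 80 blocks of 440 points, yields such a net.
-/

/-- A family `x` of points is *2-shattered* by the set system `{b | R a b}`, indexed by `a`, if
every two distinct members of `x` are cut out of `x` by some set of the system. The dual notion
is `TwoShattered (flip R)`. -/
def TwoShattered {α β ι : Type*} (R : α → β → Prop) (x : ι → β) : Prop :=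
  Pairwise fun i j => ∃ a, ∀ k, R a (x k) ↔ k = i ∨ k = j

theorem TwoShattered.injective {α β ι : Type*} {R : α → β → Prop} {x : ι → β}
    (hx : TwoShattered R x) (hι : ∀ i j : ι, ∃ k, k ≠ i ∧ k ≠ j) : Function.Injective x := by
  intro i j hij
  by_contra hne
  obtain ⟨k, hki, hkj⟩ := hι i j
  obtain ⟨a, ha⟩ := hx hki.symm
  have hj : R a (x j) := hij ▸ (ha i).2 (.inl rfl)
  rcases (ha j).1 hj with h | h
  · exact hne h.symm
  · exact hkj h.symm

theorem TwoShattered.comp_injective {α β ι κ : Type*} {R : α → β → Prop} {x : ι → β}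
    (hx : TwoShattered R x) {e : κ → ι} (he : Function.Injective e) : TwoShattered R (x ∘ e) :=
  fun i j hij => (hx (he.ne hij)).imp fun a ha k => by
    simp only [Function.comp_apply, ha, he.eq_iff]

section Voronoi

variable {V ι : Type*} {G : SimpleGraph V}

theorem exists_dist_le_and_dist_le (hG : G.Connected) {u v : V} {m n : ℕ}
    (h : G.dist u v ≤ m + n) : ∃ w, G.dist u w ≤ m ∧ G.dist w v ≤ n := by
  obtain ⟨p, hp⟩ := hG.exists_walk_length_eq_dist u v
  refine ⟨p.getVert m, (dist_le (p.take m)).trans ?_, (dist_le (p.drop m)).trans ?_⟩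
  · simp only [Walk.take_length, inf_le_left]
  · simp only [Walk.drop_length]
    lia

theorem exists_walk_dist_add_dist_eq (hG : G.Connected) (u v : V) :
    ∃ p : G.Walk u v, ∀ w ∈ p.support, G.dist u w + G.dist w v = G.dist u v := by
  classical
  obtain ⟨p, hp⟩ := hG.exists_walk_length_eq_dist u v
  refine ⟨p, fun w hw => le_antisymm ?_ hG.dist_triangle⟩
  calc G.dist u w + G.dist w v ≤ (p.takeUntil w hw).length + (p.dropUntil w hw).length :=
        add_le_add (dist_le _) (dist_le _)
    _ = G.dist u v := by rw [← Walk.length_append, p.take_spec hw, hp]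

/-- The Voronoi cell of the centre `x i`: the vertices that are nearest to `x i` among all the
centres. Ties go to the smaller index, which makes the cells disjoint. -/
def voronoiCell [LinearOrder ι] (G : SimpleGraph V) (x : ι → V) (i : ι) : Set V :=
  {u | ∀ j, toLex (G.dist u (x i), i) ≤ toLex (G.dist u (x j), j)}

variable [LinearOrder ι] {x : ι → V} {i j : ι} {u v : V}

theorem mem_voronoiCell_iff :
    u ∈ voronoiCell G x i ↔
      ∀ j, G.dist u (x i) < G.dist u (x j) ∨ G.dist u (x i) = G.dist u (x j) ∧ i ≤ j := by
  simp only [voronoiCell, Set.mem_ofPred_eq, Prod.Lex.toLex_le_toLex]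

theorem disjoint_voronoiCell (hij : i ≠ j) :
    Disjoint (voronoiCell G x i) (voronoiCell G x j) :=
  Set.disjoint_left.2 fun _ hi hj =>
    hij (congrArg (fun z => (ofLex z).2) (le_antisymm (hi j) (hj i)))

theorem center_mem_voronoiCell (hG : G.Connected) (hx : Function.Injective x) (i : ι) :
    x i ∈ voronoiCell G x i := by
  rw [mem_voronoiCell_iff]
  intro j
  rcases eq_or_ne i j with rfl | hij
  · exact .inr ⟨rfl, le_rfl⟩
  · exact .inl (by simpa only [dist_self] using hG.pos_dist_of_ne (hx.ne hij))

theorem mem_voronoiCell_of_dist_add_dist_eq (hG : G.Connected) (hu : u ∈ voronoiCell G x i)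
    (hv : G.dist u v + G.dist v (x i) = G.dist u (x i)) : v ∈ voronoiCell G x i := by
  rw [mem_voronoiCell_iff] at hu ⊢
  intro j
  have := hu j
  have := hG.dist_triangle (u := u) (v := v) (w := x j)
  lia

theorem induce_voronoiCell_connected (hG : G.Connected) (hx : Function.Injective x) (i : ι) :
    (G.induce (voronoiCell G x i)).Connected := by
  rw [connected_iff_exists_forall_reachable]
  refine ⟨⟨x i, center_mem_voronoiCell hG hx i⟩, fun ⟨u, hu⟩ => ?_⟩
  obtain ⟨p, hp⟩ := exists_walk_dist_add_dist_eq hG u (x i)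
  have hcell : ∀ w ∈ p.support, w ∈ voronoiCell G x i := fun w hw =>
    mem_voronoiCell_of_dist_add_dist_eq hG hu (hp w hw)
  exact (p.induce _ hcell).reachable.symm

theorem mem_voronoiCell_or_mem_voronoiCell
    (h : ∀ k, k ≠ i → k ≠ j → G.dist u (x j) < G.dist u (x k)) :
    u ∈ voronoiCell G x i ∨ u ∈ voronoiCell G x j := by
  simp only [mem_voronoiCell_iff]
  rcases le_total (toLex (G.dist u (x i), i)) (toLex (G.dist u (x j), j)) with hle | hle <;>
    rw [Prod.Lex.toLex_le_toLex] at hle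
  · refine .inl fun k => ?_
    rcases eq_or_ne k i with rfl | hki
    · exact .inr ⟨rfl, le_rfl⟩
    rcases eq_or_ne k j with rfl | hkj
    · exact hle
    · have := h k hki hkj
      lia
  · refine .inr fun k => ?_
    rcases eq_or_ne k j with rfl | hkj
    · exact .inr ⟨rfl, le_rfl⟩
    rcases eq_or_ne k i with rfl | hki
    · exact hle
    · exact .inl (h k hki hkj)

theorem exists_adj_voronoiCell_of_mem (hG : G.Connected) (hx : Function.Injective x) (hij : i ≠ j)
    (hu : u ∈ voronoiCell G x i) (h : ∀ k, k ≠ i → k ≠ j → G.dist u (x j) < G.dist u (x k)) :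
    ∃ a ∈ voronoiCell G x i, ∃ b ∈ voronoiCell G x j, G.Adj a b := by
  obtain ⟨p, hp⟩ := exists_walk_dist_add_dist_eq hG u (x j)
  have hcells : ∀ w ∈ p.support, w ∈ voronoiCell G x i ∨ w ∈ voronoiCell G x j := by
    refine fun w hw => mem_voronoiCell_or_mem_voronoiCell fun k hki hkj => ?_
    have := hp w hw
    have := h k hki hkj
    have := hG.dist_triangle (u := u) (v := w) (w := x k)
    lia
  have hend : x j ∉ voronoiCell G x i :=
    Set.disjoint_right.1 (disjoint_voronoiCell hij) (center_mem_voronoiCell hG hx j)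
  obtain ⟨d, hd, ha, hb⟩ := p.exists_boundary_dart _ hu hend
  exact ⟨d.fst, ha, d.snd, (hcells _ (p.dart_snd_mem_support_of_mem_darts hd)).resolve_left hb,
    d.adj⟩

theorem exists_adj_voronoiCell (hG : G.Connected) (hx : Function.Injective x) (hij : i ≠ j)
    {r : ℕ} (hi : G.dist u (x i) ≤ r) (hj : G.dist u (x j) ≤ r)
    (h : ∀ k, k ≠ i → k ≠ j → r < G.dist u (x k)) :
    ∃ a ∈ voronoiCell G x i, ∃ b ∈ voronoiCell G x j, G.Adj a b := by
  have hi' : ∀ k, k ≠ j → k ≠ i → G.dist u (x i) < G.dist u (x k) := fun k hkj hki =>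
    hi.trans_lt (h k hki hkj)
  have hj' : ∀ k, k ≠ i → k ≠ j → G.dist u (x j) < G.dist u (x k) := fun k hki hkj =>
    hj.trans_lt (h k hki hkj)
  rcases mem_voronoiCell_or_mem_voronoiCell hj' with hu | hu
  · exact exists_adj_voronoiCell_of_mem hG hx hij hu hj'
  · obtain ⟨b, hb, a, ha, hab⟩ := exists_adj_voronoiCell_of_mem hG hx hij.symm hu hi'
    exact ⟨a, ha, b, hb, hab.symm⟩

end Voronoi

theorem TwoShattered.hasMinor_completeGraph {V ι : Type*} {G : SimpleGraph V} {x : ι → V} {r : ℕ}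
    (hx : TwoShattered (fun u v => G.dist u v ≤ r) x) (hinj : Function.Injective x)
    (hG : G.Connected) : HasMinor G (completeGraph ι) := by
  classical
  let : LinearOrder ι := WellOrderingRel.isWellOrder.linearOrder
  refine ⟨voronoiCell G x, induce_voronoiCell_connected hG hinj,
    fun i j hij => disjoint_voronoiCell hij, fun i j hij => ?_⟩
  obtain ⟨u, hu⟩ := hx hij
  exact exists_adj_voronoiCell hG hinj hij ((hu i).2 (.inl rfl)) ((hu j).2 (.inr rfl))
    fun k hki hkj => not_le.1 fun hk => ((hu k).1 hk).elim hki hkj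

section Trace

variable {α β κ : Type*} [Fintype κ] {R : α → β → Prop} {u : κ → β}

open scoped Classical in
/-- The trace of the set system `{b | R a b}`, indexed by `a`, on the family `u`: all the sets of
indices that members of the system cut out of `u`. -/
noncomputable def trace (R : α → β → Prop) (u : κ → β) : Finset (Finset κ) :=
  {s | ∃ a, ∀ i, i ∈ s ↔ R a (u i)}

theorem mem_trace {s : Finset κ} : s ∈ trace R u ↔ ∃ a, ∀ i, i ∈ s ↔ R a (u i) := by
  simp only [trace, Finset.mem_filter_univ]

open scoped Classical in
theorem twoShattered_of_shatters_trace {S : Finset κ} (hS : (trace R u).Shatters S) :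
    TwoShattered R fun i : S => u i := by
  intro i j _
  have hpair : {(i : κ), (j : κ)} ⊆ S := by
    simp only [Finset.insert_subset_iff, Finset.singleton_subset_iff, i.2, j.2, and_self]
  obtain ⟨s, hs, hSs⟩ := hS hpair
  obtain ⟨a, ha⟩ := mem_trace.1 hs
  refine ⟨a, fun k => ?_⟩
  have := Finset.ext_iff.1 hSs k
  simpa only [← ha, Finset.mem_inter, k.2, true_and, Finset.mem_insert, Finset.mem_singleton,
    Subtype.coe_inj] using this

theorem card_trace_le_of_not_twoShattered {d : ℕ}
    (hR : ∀ x : Fin (d + 1) → β, ¬ TwoShattered R x) :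
    (trace R u).card ≤ ∑ i ∈ Finset.Iic d, (Fintype.card κ).choose i := by
  classical
  have hdim : (trace R u).vcDim ≤ d := by
    refine Finset.sup_le fun S hS => ?_
    by_contra! hlt
    have hcard : Nonempty (Fin (d + 1) ↪ S) :=
      Function.Embedding.nonempty_of_card_le (by simpa using hlt)
    obtain ⟨e⟩ := hcard
    exact hR _ ((twoShattered_of_shatters_trace (Finset.mem_shatterer.1 hS)).comp_injective
      e.injective)
  calc (trace R u).card ≤ (trace R u).shatterer.card := Finset.card_le_card_shatterer _
    _ ≤ ∑ i ∈ Finset.Iic (trace R u).vcDim, (Fintype.card κ).choose i :=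
      Finset.card_shatterer_le_sum_vcDim
    _ ≤ ∑ i ∈ Finset.Iic d, (Fintype.card κ).choose i :=
      Finset.sum_le_sum_of_subset (Finset.Iic_subset_Iic.2 hdim)

end Trace

section Probability

open MeasureTheory
open scoped ENNReal

theorem sum_measure_le_of_forall_card_le {Ω ι : Type*} [MeasurableSpace Ω] [Fintype ι]
    (P : Measure Ω) [IsProbabilityMeasure P] {A : ι → Set Ω} (hA : ∀ i, MeasurableSet (A i))
    {N : ℕ} (h : ∀ ω, {i | ω ∈ A i}.ncard ≤ N) : ∑ i, P (A i) ≤ N := by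
  classical
  calc ∑ i, P (A i) = ∫⁻ ω, ∑ i, (A i).indicator 1 ω ∂P := by
        rw [lintegral_finsetSum _ fun i _ => measurable_one.indicator (hA i)]
        simp only [lintegral_indicator_one (hA _)]
    _ ≤ ∫⁻ _, N ∂P := by
        refine lintegral_mono fun ω => ?_
        have := h ω
        simp only [Set.indicator_apply, Pi.one_apply, Finset.sum_boole]
        rw [Set.ncard_eq_toFinset_card', Set.toFinset_ofPred] at this
        exact_mod_cast this
    _ = N := by simp only [lintegral_const, measure_univ, mul_one]

theorem le_prod_measure_of_forall_le {Ω Ω' : Type*} [MeasurableSpace Ω] [MeasurableSpace Ω']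
    {P : Measure Ω} [IsProbabilityMeasure P] {Q : Measure Ω'} [SFinite Q] {c : ℝ≥0∞}
    {E : Set (Ω × Ω')} (hE : MeasurableSet E) (h : ∀ ω, c ≤ Q (Prod.mk ω ⁻¹' E)) :
    c ≤ P.prod Q E := by
  calc c = ∫⁻ _, c ∂P := by simp only [lintegral_const, measure_univ, mul_one]
    _ ≤ ∫⁻ ω, Q (Prod.mk ω ⁻¹' E) ∂P := lintegral_mono h
    _ = P.prod Q E := (Measure.prod_apply hE).symm

section Swap

variable {ι γ : Type*}

/-- Exchanges the two components of `z b` for those `b` with `σ b = true`: the symmetry of a pair of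
samples on which the double sampling argument rests. -/
def swapBlocks (σ : ι → Bool) (z : ι → γ × γ) (b : ι) : γ × γ :=
  (if σ b then Prod.swap else id) (z b)

theorem measurePreserving_swapBlocks [Fintype ι] [MeasurableSpace γ] (Q : Measure γ)
    [SigmaFinite Q] (σ : ι → Bool) : MeasurePreserving (swapBlocks σ)
      (Measure.pi fun _ => Q.prod Q) (Measure.pi fun _ => Q.prod Q) :=
  measurePreserving_pi (f := fun b => if σ b then Prod.swap else id) _ _ fun b => by
    split_ifs
    · exact Measure.measurePreserving_swap
    · exact MeasurePreserving.id _

end Swap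

section EpsilonNet

variable {α β : Type*} {R : α → β → Prop} {k m : ℕ}

/-- The bad event of the double sampling argument: of two samples, each made of `k` blocks of `m`
points, some set `{b | R a b}` misses the first one altogether and meets every block of the second
one. The samples are zipped blockwise, so that `swapBlocks` acts on them. -/
def splitEvent (R : α → β → Prop) (k m : ℕ) : Set (Fin k → (Fin m → β) × (Fin m → β)) :=
  {z | ∃ a, (∀ b j, ¬ R a ((z b).1 j)) ∧ ∀ b, ∃ j, R a ((z b).2 j)}

-- If a set witnesses the event for the swapped samples, then its trace on the original first
-- sample is nonempty in exactly those blocks that were swapped. So this trace determines `σ`.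
theorem card_swapBlocks_mem_splitEvent_le (z : Fin k → (Fin m → β) × (Fin m → β)) :
    {σ | swapBlocks σ z ∈ splitEvent R k m}.ncard ≤
      (trace R fun i : Fin k × Fin m => (z i.1).1 i.2).card := by
  classical
  let bits (s : Finset (Fin k × Fin m)) (b : Fin k) : Bool := decide (∃ j, (b, j) ∈ s)
  have hsub : {σ | swapBlocks σ z ∈ splitEvent R k m} ⊆
      (trace R fun i : Fin k × Fin m => (z i.1).1 i.2).image bits := by
    rintro σ ⟨a, hmiss, hhit⟩
    refine Finset.mem_coe.2 (Finset.mem_image.2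
      ⟨({i | R a ((z i.1).1 i.2)} : Finset (Fin k × Fin m)),
        mem_trace.2 ⟨a, fun i => Finset.mem_filter_univ i⟩, funext fun b => ?_⟩)
    have hm := hmiss b
    have hh := hhit b
    cases hσ : σ b <;> simp_all [bits, swapBlocks]
  calc {σ | swapBlocks σ z ∈ splitEvent R k m}.ncard
    _ ≤ ((trace R fun i : Fin k × Fin m => (z i.1).1 i.2).image bits).card := by
        rw [← Set.ncard_coe_finset]
        exact Set.ncard_le_ncard hsub
    _ ≤ _ := Finset.card_image_le

variable [MeasurableSpace β]

theorem measurableSet_splitEvent [Countable α] (hR : ∀ a, MeasurableSet {b | R a b}) :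
    MeasurableSet (splitEvent R k m) := by
  have hRm : ∀ a, Measurable (R a) := fun a => measurableSet_setOfPred.1 (hR a)
  refine measurableSet_setOfPred.2 (.exists fun a => .and
    (.forall fun b => .forall fun j => .not ?_) (.forall fun b => .exists fun j => ?_)) <;>
  exact (hRm a).comp (by fun_prop)

theorem two_pow_mul_measure_splitEvent_le [Countable α] (hR : ∀ a, MeasurableSet {b | R a b})
    (Q : Measure (Fin m → β)) [IsProbabilityMeasure Q] {N : ℕ}
    (hN : ∀ u : Fin k × Fin m → β, (trace R u).card ≤ N) :
    2 ^ k * Measure.pi (fun _ => Q.prod Q) (splitEvent R k m) ≤ N := by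
  have hE : MeasurableSet (splitEvent R k m) := measurableSet_splitEvent hR
  calc 2 ^ k * Measure.pi (fun _ => Q.prod Q) (splitEvent R k m)
    _ = ∑ σ, Measure.pi (fun _ => Q.prod Q) (swapBlocks σ ⁻¹' splitEvent R k m) := by
        simp only [(measurePreserving_swapBlocks Q _).measure_preimage hE.nullMeasurableSet,
          Finset.sum_const, Finset.card_univ, Fintype.card_pi, Fintype.card_bool,
          Finset.prod_const, Fintype.card_fin, nsmul_eq_mul, Nat.cast_pow, Nat.cast_ofNat]
    _ ≤ N := sum_measure_le_of_forall_card_le _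
        (fun σ => (measurePreserving_swapBlocks Q σ).measurable hE)
        fun z => (card_swapBlocks_mem_splitEvent_le z).trans (hN _)

theorem one_sub_le_measure_pi_forall_exists_mem (μ : Measure β) [IsProbabilityMeasure μ]
    {S : Set β} (hS : MeasurableSet S) {ε : ℝ≥0∞} (hε : ε ≤ μ S) :
    1 - k * (1 - ε) ^ m ≤ Measure.pi (fun _ : Fin k => Measure.pi fun _ : Fin m => μ)
      {t | ∀ b, ∃ j, t b j ∈ S} := by
  set P := Measure.pi fun _ : Fin k => Measure.pi fun _ : Fin m => μ
  have hblock (b : Fin k) : P {t | ∀ j, t b j ∉ S} ≤ (1 - ε) ^ m := by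
    have heval : MeasurePreserving (Function.eval b) P (Measure.pi fun _ : Fin m => μ) :=
      measurePreserving_eval _ b
    calc P {t | ∀ j, t b j ∉ S} = P (Function.eval b ⁻¹' Set.univ.pi fun _ => Sᶜ) := by
          congr 1
          ext t
          simp only [Set.mem_ofPred_eq, Set.mem_preimage, Set.mem_univ_pi, Function.eval,
            Set.mem_compl_iff]
      _ = (1 - μ S) ^ m := by
          rw [heval.measure_preimage (MeasurableSet.univ_pi fun _ => hS.compl).nullMeasurableSet,
            Measure.pi_pi, Finset.prod_const, Finset.card_univ, Fintype.card_fin,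
            prob_compl_eq_one_sub hS]
      _ ≤ (1 - ε) ^ m := by gcongr
  have hcompl : {t : Fin k → Fin m → β | ∀ b, ∃ j, t b j ∈ S}ᶜ = ⋃ b, {t | ∀ j, t b j ∉ S} := by
    ext t
    simp
  rw [tsub_le_iff_left]
  calc 1 = P Set.univ := measure_univ.symm
    _ ≤ P {t | ∀ b, ∃ j, t b j ∈ S} + P {t | ∀ b, ∃ j, t b j ∈ S}ᶜ := measure_univ_le_add_compl _
    _ ≤ P {t | ∀ b, ∃ j, t b j ∈ S} + ∑ b : Fin k, (1 - ε) ^ m := by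
        rw [hcompl]
        gcongr
        exact (measure_iUnion_fintype_le _ _).trans (Finset.sum_le_sum fun b _ => hblock b)
    _ = k * (1 - ε) ^ m + P {t | ∀ b, ∃ j, t b j ∈ S} := by
        rw [Finset.sum_const, Finset.card_univ, Fintype.card_fin, nsmul_eq_mul, add_comm]

theorem one_sub_le_measure_splitEvent [Countable α] (hR : ∀ a, MeasurableSet {b | R a b})
    (μ : Measure β) [IsProbabilityMeasure μ] {ε : ℝ≥0∞} (hε : ∀ a, ε ≤ μ {b | R a b})
    (hmiss : ∀ s : Fin k → Fin m → β, ∃ a, ∀ b j, ¬ R a (s b j)) :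
    1 - k * (1 - ε) ^ m ≤
      Measure.pi (fun _ => (Measure.pi fun _ => μ).prod (Measure.pi fun _ => μ))
        (splitEvent R k m) := by
  have hzip := (measurePreserving_arrowProdEquivProdArrow (Fin m → β) (Fin m → β) (Fin k)
    (fun _ => Measure.pi fun _ => μ) (fun _ => Measure.pi fun _ => μ)).symm
  have hE : MeasurableSet (splitEvent R k m) := measurableSet_splitEvent hR
  rw [← hzip.measure_preimage hE.nullMeasurableSet]
  refine le_prod_measure_of_forall_le (hzip.measurable hE) fun s => ?_
  obtain ⟨a, ha⟩ := hmiss s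
  exact (one_sub_le_measure_pi_forall_exists_mem μ (hR a) (hε a)).trans
    (measure_mono fun t ht => ⟨a, ha, ht⟩)

theorem exists_finset_card_le_of_le_measure [Countable α] (hR : ∀ a, MeasurableSet {b | R a b})
    (μ : Measure β) [IsProbabilityMeasure μ] {ε : ℝ≥0∞} (hε : ∀ a, ε ≤ μ {b | R a b})
    (hm : k * (1 - ε) ^ m ≤ 1 / 2) {N : ℕ}
    (hN : ∀ u : Fin k × Fin m → β, (trace R u).card ≤ N) (hk : 2 * N < 2 ^ k) :
    ∃ X : Finset β, X.card ≤ k * m ∧ ∀ a, ∃ b ∈ X, R a b := by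
  classical
  by_contra! hX
  have hmiss (s : Fin k → Fin m → β) : ∃ a, ∀ b j, ¬ R a (s b j) := by
    have hcard : (Finset.univ.image fun i : Fin k × Fin m => s i.1 i.2).card ≤ k * m :=
      Finset.card_image_le.trans (by simp)
    obtain ⟨a, ha⟩ := hX _ hcard
    exact ⟨a, fun b j => ha _ (Finset.mem_image_of_mem _ (Finset.mem_univ (b, j)))⟩
  set p := Measure.pi (fun _ => (Measure.pi fun _ => μ).prod (Measure.pi fun _ => μ))
    (splitEvent R k m)
  have hlower : 1 / 2 ≤ p := by
    calc (1 / 2 : ℝ≥0∞) = 1 - 1 / 2 := by simp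
      _ ≤ 1 - k * (1 - ε) ^ m := tsub_le_tsub_left hm 1
      _ ≤ p := one_sub_le_measure_splitEvent hR μ hε hmiss
  have hupper : 2 ^ k * p ≤ N := two_pow_mul_measure_splitEvent_le hR _ hN
  have : (2 : ℝ≥0∞) ^ k ≤ 2 * N := by
    calc (2 : ℝ≥0∞) ^ k = 2 * (2 ^ k * (1 / 2)) := by
          rw [mul_left_comm, one_div, ENNReal.mul_inv_cancel two_ne_zero ENNReal.ofNat_ne_top,
            mul_one]
      _ ≤ 2 * N := by gcongr; exact (mul_le_mul_right hlower _).trans hupper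
  exact hk.not_ge (by exact_mod_cast this)

end EpsilonNet

theorem measure_pi_removeNth_le {α : Type*} [MeasurableSpace α] (μ : Measure α)
    [IsProbabilityMeasure μ] {n : ℕ} (c : Fin (n + 1)) {E : Set (α × (Fin n → α))}
    (hE : MeasurableSet E) {ε : ℝ≥0∞} (h : ∀ y, μ {a | (a, y) ∈ E} ≤ ε) :
    Measure.pi (fun _ => μ) {x | (x c, c.removeNth x) ∈ E} ≤ ε := by
  have hsplit := measurePreserving_piFinSuccAbove (fun _ => μ) c
  calc Measure.pi (fun _ => μ) {x | (x c, c.removeNth x) ∈ E}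
    _ = μ.prod (Measure.pi fun _ => μ) E := hsplit.measure_preimage hE.nullMeasurableSet
    _ = ∫⁻ y, μ {a | (a, y) ∈ E} ∂Measure.pi fun _ => μ := Measure.prod_apply_symm hE
    _ ≤ ∫⁻ _, ε ∂Measure.pi fun _ => μ := lintegral_mono h
    _ = ε := by simp only [lintegral_const, measure_univ, mul_one]

theorem exists_forall_succAbove_not_of_measure_le {α β : Type*} [Countable α] [MeasurableSpace α]
    [DiscreteMeasurableSpace α] (μ : Measure α) [IsProbabilityMeasure μ] (R : α → β → Prop)
    (f : α → α → β) {n : ℕ} {ε : ℝ≥0∞} (hε : (n + 1) * n ^ 2 * ε < 1)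
    (hR : ∀ b, μ {a | R a b} ≤ ε) :
    ∃ x : Fin (n + 1) → α, ∀ c i j, ¬ R (x c) (f (x (c.succAbove i)) (x (c.succAbove j))) := by
  let bad (t : Fin (n + 1) × Fin n × Fin n) : Set (Fin (n + 1) → α) :=
    {x | R (x t.1) (f (x (t.1.succAbove t.2.1)) (x (t.1.succAbove t.2.2)))}
  have hbad (t) : Measure.pi (fun _ => μ) (bad t) ≤ ε :=
    measure_pi_removeNth_le μ t.1 (E := {z | R z.1 (f (z.2 t.2.1) (z.2 t.2.2))}) .of_discrete
      fun y => hR (f (y t.2.1) (y t.2.2))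
  have hunion : Measure.pi (fun _ => μ) (⋃ t, bad t) < 1 := by
    calc Measure.pi (fun _ => μ) (⋃ t, bad t)
      _ ≤ ∑ _ : Fin (n + 1) × Fin n × Fin n, ε :=
          (measure_iUnion_fintype_le _ _).trans (Finset.sum_le_sum fun t _ => hbad t)
      _ = (n + 1) * n ^ 2 * ε := by
          simp [sq]
      _ < 1 := hε
  obtain ⟨x, hx⟩ : (⋃ t, bad t)ᶜ.Nonempty := by
    rw [Set.nonempty_compl]
    intro h
    rw [h, measure_univ] at hunion
    exact hunion.false
  exact ⟨x, fun c i j hc => hx (Set.mem_iUnion.2 ⟨(c, i, j), hc⟩)⟩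

theorem exists_twoShattered_flip_of_measure_le {α β : Type*} [Countable α] [MeasurableSpace α]
    [DiscreteMeasurableSpace α] (μ : Measure α) [IsProbabilityMeasure μ] {R : α → β → Prop}
    (hmeet : ∀ a a', ∃ b, R a b ∧ R a' b) {n : ℕ} {ε : ℝ≥0∞} (hε : (n + 1) * n ^ 2 * ε < 1)
    (hR : ∀ b, μ {a | R a b} ≤ ε) : ∃ x : Fin (n + 1) → α, TwoShattered (flip R) x := by
  choose f hf hf' using hmeet
  obtain ⟨x, hx⟩ := exists_forall_succAbove_not_of_measure_le μ R f hε hR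
  refine ⟨x, fun i j _ => ⟨f (x i) (x j), fun c => ⟨fun hc => ?_, ?_⟩⟩⟩
  · by_contra! hne
    obtain ⟨i', rfl⟩ := Fin.exists_succAbove_eq hne.1.symm
    obtain ⟨j', rfl⟩ := Fin.exists_succAbove_eq hne.2.symm
    exact hx c i' j' hc
  · rintro (rfl | rfl)
    exacts [hf _ _, hf' _ _]

section Minimax

open scoped Matrix

variable {α β : Type*}

theorem exists_mem_stdSimplex_vecMul_le_mulVec [Fintype α] [Fintype β] [Nonempty α]
    [Nonempty β] (A : Matrix α β ℝ) :
    ∃ q ∈ stdSimplex ℝ α, ∃ p ∈ stdSimplex ℝ β, ∀ a b, (q ᵥ* A) b ≤ (A *ᵥ p) a := by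
  classical
  have hcont_left (p : β → ℝ) : Continuous fun q : α → ℝ => q ⬝ᵥ A *ᵥ p := by fun_prop
  have hcont_right (q : α → ℝ) : Continuous fun p : β → ℝ => q ⬝ᵥ A *ᵥ p := by fun_prop
  obtain ⟨q, hq, p, hp, hsaddle⟩ := Sion.exists_isSaddlePointOn
    (X := stdSimplex ℝ α) (Y := stdSimplex ℝ β) (f := fun q p => q ⬝ᵥ A *ᵥ p)
    ⟨_, single_mem_stdSimplex ℝ (Classical.arbitrary α)⟩ (convex_stdSimplex ℝ α)
    (isCompact_stdSimplex ℝ α)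
    (fun p _ => (hcont_left p).lowerSemicontinuous.lowerSemicontinuousOn _)
    (fun p _ => ((dotProductBilin ℝ ℝ).flip (A *ᵥ p)).convexOn
      (convex_stdSimplex ℝ α) |>.quasiconvexOn)
    (convex_stdSimplex ℝ β) ⟨_, single_mem_stdSimplex ℝ (Classical.arbitrary β)⟩
    (isCompact_stdSimplex ℝ β)
    (fun q _ => (hcont_right q).upperSemicontinuous.upperSemicontinuousOn _)
    (fun q _ => (dotProductBilin ℝ ℝ q ∘ₗ A.mulVecLin).concaveOn
      (convex_stdSimplex ℝ β) |>.quasiconcaveOn)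
  refine ⟨q, hq, p, hp, fun a b => ?_⟩
  have : q ⬝ᵥ A *ᵥ Pi.single b 1 ≤ Pi.single a 1 ⬝ᵥ A *ᵥ p :=
    hsaddle _ (single_mem_stdSimplex ℝ a) _ (single_mem_stdSimplex ℝ b)
  rwa [Matrix.dotProduct_mulVec, dotProduct_single_one, single_one_dotProduct] at this

theorem exists_measure_apply_eq_of_mem_stdSimplex [Fintype β] [MeasurableSpace β] {p : β → ℝ}
    (hp : p ∈ stdSimplex ℝ β) : ∃ μ : Measure β, IsProbabilityMeasure μ ∧
      ∀ s, MeasurableSet s → μ s = ENNReal.ofReal (∑ b, s.indicator p b) := by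
  have hsum : ∑ b, ENNReal.ofReal (p b) = 1 := by
    rw [← ENNReal.ofReal_sum_of_nonneg fun b _ => hp.1 b, hp.2, ENNReal.ofReal_one]
  refine ⟨(PMF.ofFintype _ hsum).toMeasure, inferInstance, fun s hs => ?_⟩
  classical
  rw [PMF.toMeasure_apply_eq_toOuterMeasure_apply _ hs, PMF.toOuterMeasure_apply_fintype,
    ENNReal.ofReal_sum_of_nonneg fun b _ => Set.indicator_nonneg (fun b _ => hp.1 b) b]
  refine Finset.sum_congr rfl fun b _ => ?_
  simp only [Set.indicator_apply, PMF.ofFintype_apply, apply_ite ENNReal.ofReal,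
    ENNReal.ofReal_zero]

theorem exists_isProbabilityMeasure_measure_le_measure [Finite α] [Finite β] [Nonempty α]
    [Nonempty β] [MeasurableSpace α] [MeasurableSpace β] [DiscreteMeasurableSpace α]
    [DiscreteMeasurableSpace β] (R : α → β → Prop) :
    ∃ (μ : Measure α) (ν : Measure β), IsProbabilityMeasure μ ∧ IsProbabilityMeasure ν ∧
      ∀ a b, μ {a' | R a' b} ≤ ν {b' | R a b'} := by
  classical
  have := Fintype.ofFinite α
  have := Fintype.ofFinite β
  obtain ⟨q, hq, p, hp, hqp⟩ :=
    exists_mem_stdSimplex_vecMul_le_mulVec (Matrix.of fun a b => if R a b then (1 : ℝ) else 0)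
  obtain ⟨μ, hμ, hμq⟩ := exists_measure_apply_eq_of_mem_stdSimplex hq
  obtain ⟨ν, hν, hνp⟩ := exists_measure_apply_eq_of_mem_stdSimplex hp
  refine ⟨μ, ν, hμ, hν, fun a b => ?_⟩
  rw [hμq _ .of_discrete, hνp _ .of_discrete]
  refine ENNReal.ofReal_le_ofReal ?_
  simpa [Matrix.vecMul, Matrix.mulVec, dotProduct, Set.indicator_apply] using hqp a b

end Minimax

section Transversal

variable {α β : Type*} {R : α → β → Prop} {n d k m : ℕ} {ε : ℝ≥0∞}

theorem exists_transversal_of_not_twoShattered [Finite α] [Finite β] [Nonempty α] [Nonempty β]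
    (hmeet : ∀ a a', ∃ b, R a b ∧ R a' b)
    (hflip : ∀ x : Fin (n + 1) → α, ¬ TwoShattered (flip R) x)
    (hR : ∀ x : Fin (d + 1) → β, ¬ TwoShattered R x) (hε : (n + 1) * n ^ 2 * ε < 1)
    (hm : k * (1 - ε) ^ m ≤ 1 / 2) (hk : 2 * ∑ i ∈ Finset.Iic d, (k * m).choose i < 2 ^ k) :
    ∃ X : Finset β, X.card ≤ k * m ∧ ∀ a, ∃ b ∈ X, R a b := by
  let _ : MeasurableSpace α := ⊤
  let _ : MeasurableSpace β := ⊤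
  obtain ⟨μ, ν, _, _, hμν⟩ := exists_isProbabilityMeasure_measure_le_measure R
  obtain ⟨b₀, hb₀⟩ : ∃ b, ε ≤ μ {a | R a b} := by
    by_contra! hsmall
    obtain ⟨x, hx⟩ := exists_twoShattered_flip_of_measure_le μ hmeet hε fun b => (hsmall b).le
    exact hflip x hx
  refine exists_finset_card_le_of_le_measure (fun a => .of_discrete) ν
    (fun a => hb₀.trans (hμν a b₀)) hm (fun u => ?_) hk
  simpa only [Fintype.card_prod, Fintype.card_fin] using
    card_trace_le_of_not_twoShattered (u := u) hR

theorem exists_finset_dist_le_of_not_hasMinor_completeGraph {V : Type*} [Finite V]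
    {G : SimpleGraph V} (hG : G.Connected) {r : ℕ} (hdiam : ∀ u v, G.dist u v ≤ r + r)
    (hn : 2 ≤ n) (hminor : ¬ HasMinor G (completeGraph (Fin (n + 1))))
    (hε : (n + 1) * n ^ 2 * ε < 1) (hm : k * (1 - ε) ^ m ≤ 1 / 2)
    (hk : 2 * ∑ i ∈ Finset.Iic n, (k * m).choose i < 2 ^ k) :
    ∃ X : Finset V, X.card ≤ k * m ∧ ∀ v, ∃ x ∈ X, G.dist v x ≤ r := by
  have := hG.nonempty
  let R (u v : V) : Prop := G.dist u v ≤ r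
  have hflip : flip R = R := by
    ext u v
    simp only [flip, R, dist_comm]
  have hmeet (u v : V) : ∃ w, R u w ∧ R v w := by
    obtain ⟨w, hu, hv⟩ := exists_dist_le_and_dist_le hG (hdiam u v)
    exact ⟨w, hu, by rwa [← hflip]⟩
  have hR (x : Fin (n + 1) → V) : ¬ TwoShattered R x := fun hx =>
    hminor (hx.hasMinor_completeGraph
      (hx.injective fun i j => Fin.exists_ne_and_ne_of_two_lt i j (by lia)) hG)
  exact exists_transversal_of_not_twoShattered hmeet (hflip.symm ▸ hR) hR hε hm hk

end Transversal

section Numerics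

set_option exponentiation.threshold 440 in
theorem mul_one_sub_inv_pow_le_half : ((80 : ℕ) : ℝ≥0∞) * (1 - 81⁻¹) ^ 440 ≤ 1 / 2 := by
  have h : (1 - 81⁻¹ : ℝ≥0∞) = ENNReal.ofReal (80 / 81) := by
    rw [show (80 / 81 : ℝ) = 1 - 81⁻¹ by norm_num, ENNReal.ofReal_sub _ (by norm_num),
      ENNReal.ofReal_inv_of_pos (by norm_num), ENNReal.ofReal_one, ENNReal.ofReal_ofNat]
  rw [h, ← ENNReal.ofReal_pow (by norm_num), ← ENNReal.ofReal_natCast,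
    ← ENNReal.ofReal_mul (by norm_num), ENNReal.ofReal_le_iff_le_toReal (by simp)]
  norm_num

theorem sum_choose_lt_two_pow : 2 * ∑ i ∈ Finset.Iic 4, (80 * 440).choose i < 2 ^ 80 := by
  rw [← Nat.range_succ_eq_Iic]
  norm_num [Finset.sum_range_succ, Nat.choose_eq_descFactorial_div_factorial, Nat.descFactorial]

end Numerics

end Probability

theorem stmt19_general (ℓ : ℕ) {V : Type*} [Finite V] (G : SimpleGraph V)
    (hminor : ¬ HasMinor G (completeGraph (Fin 5)))
    (hdiam : ∀ u v : V, G.edist u v ≤ (2 * ℓ : ℕ)) :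
    ∃ X : Finset V, X.card ≤ 35200 ∧ ∀ v : V, ∃ x ∈ X, G.edist x v ≤ (ℓ : ℕ) := by
  rcases isEmpty_or_nonempty V with _ | _
  · exact ⟨∅, Nat.zero_le _, isEmptyElim⟩
  have hG : G.Connected :=
    ⟨fun u v => reachable_of_edist_ne_top (ne_top_of_le_ne_top (ENat.natCast_ne_top _) (hdiam u v))⟩
  have hdist (u v : V) : (G.dist u v : ℕ∞) = G.edist u v := (hG u v).coe_dist_eq_edist
  have hdiam' (u v : V) : G.dist u v ≤ ℓ + ℓ := by
    rw [← two_mul]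
    exact_mod_cast hdist u v ▸ hdiam u v
  obtain ⟨X, hX, hcover⟩ := exists_finset_dist_le_of_not_hasMinor_completeGraph hG hdiam' (n := 4)
    (k := 80) (m := 440) (ε := 81⁻¹) (by norm_num) hminor
    (by
      rw [← div_eq_mul_inv]
      exact (ENNReal.div_lt_iff (by simp) (by simp)).2 (by norm_num))
    mul_one_sub_inv_pow_le_half sum_choose_lt_two_pow
  refine ⟨X, hX, fun v => ?_⟩
  obtain ⟨x, hx, hvx⟩ := hcover v
  exact ⟨x, hx, by rw [edist_comm, ← hdist]; exact_mod_cast hvx⟩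

/-- every planar graph of diameter at most `2ℓ` has a dominating set at
distance `ℓ` of size at most `35200`, i.e. it can be covered by at most `35200` balls of
radius `ℓ`. -/
theorem stmt19 (ℓ : ℕ) {V : Type*} [Fintype V] (G : SimpleGraph V)
    (hplanar : IsPlanar G)
    (hdiam : ∀ u v : V, G.edist u v ≤ (2 * ℓ : ℕ)) :
    ∃ X : Finset V, X.card ≤ 35200 ∧ ∀ v : V, ∃ x ∈ X, G.edist x v ≤ (ℓ : ℕ) :=
  stmt19_general ℓ G hplanar.1 hdiam
end
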